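/- For every n ≥ 0, the Laakso graph satisfies c₁(TC(La^{⊘n})) ≥ ((2−√2)/8)·n. -/

import Mathlib

open Finset MeasureTheory

open Finset MeasureTheory

/-- The transportation cost norm of a zero-total-mass signed measure `μ` (represented as a
function `V → ℝ`) on a finite metric space with distance `d`: the infimum of costs of
transportation plans representing `μ`. -/
noncomputable def TCnorm {V : Type*} [Fintype V] [DecidableEq V]
    (d : V → V → ℝ) (μ : V → ℝ) : ℝ :=
  sInf { c : ℝ | ∃ (n : ℕ) (a : Fin n → ℝ) (x y : Fin n → V),
    (∀ i, 0 ≤ a i) ∧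
    (∀ z : V, μ z = ∑ i, a i * ((if x i = z then (1 : ℝ) else 0) -
      (if y i = z then (1 : ℝ) else 0))) ∧
    c = ∑ i, a i * d (x i) (y i) }

/-- The `L₁`-distortion of a space `M` equipped with a distance function `ρ`:
the infimum of `D ≥ 1` such that there is a measure space `(Ω, ν)` and a map
`f : M → L₁(ν)` with `ρ x y ≤ ‖f x - f y‖₁ ≤ D * ρ x y` for all `x, y`. -/
noncomputable def c1OfDist {M : Type*} (ρ : M → M → ℝ) : ℝ :=
  sInf { D : ℝ | 1 ≤ D ∧ ∃ (Ω : Type) (_ : MeasurableSpace Ω) (ν : Measure Ω)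
    (f : M → Lp ℝ 1 ν), ∀ x y : M,
      ρ x y ≤ dist (f x) (f y) ∧ dist (f x) (f y) ≤ D * ρ x y }

/-- The `L₁`-distortion of the transportation cost space `TC(V, d)`, i.e. of the space of
zero-total-mass signed measures on `V` with the metric induced by the transportation cost
norm. -/
noncomputable def c1TC {V : Type*} [Fintype V] [DecidableEq V] (d : V → V → ℝ) : ℝ :=
  c1OfDist (fun μ ν : {μ : V → ℝ // ∑ x, μ x = 0} => TCnorm d (fun x => μ.1 x - ν.1 x))

/-- The support of a signed measure given as a function. -/
def msupp {V : Type*} (μ : V → ℝ) : Set V := {x | μ x ≠ 0}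

/-- Diameter of a set with respect to a distance function. -/
noncomputable def sDiam {V : Type*} (d : V → V → ℝ) (S : Set V) : ℝ :=
  sSup { c : ℝ | ∃ x ∈ S, ∃ y ∈ S, c = d x y }

/-- Distance between two sets with respect to a distance function. -/
noncomputable def sDist {V : Type*} (d : V → V → ℝ) (S T : Set V) : ℝ :=
  sInf { c : ℝ | ∃ x ∈ S, ∃ y ∈ T, c = d x y }
/-- A finite weighted directed graph with distinguished source and sink vertices, edge
lengths, and an edge thickness function. This is the underlying data of an `st`-graph. -/
structure WGraph : Type 1 where
  /-- vertex set -/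
  V : Type
  /-- edge index set -/
  ι : Type
  finV : Fintype V
  decV : DecidableEq V
  finι : Fintype ι
  decι : DecidableEq ι
  /-- initial vertex of an edge -/
  src : ι → V
  /-- terminal vertex of an edge -/
  dst : ι → V
  /-- length of an edge -/
  len : ι → ℝ
  /-- thickness of an edge -/
  th : ι → ℝ
  /-- source vertex -/
  s : V
  /-- sink vertex -/
  t : V

attribute [instance] WGraph.finV WGraph.decV WGraph.finι WGraph.decι

namespace WGraph

/-- Initial vertex of a step (an edge traversed forwards or backwards). -/
def stepSrc (G : WGraph) (p : G.ι × Bool) : G.V := if p.2 then G.src p.1 else G.dst p.1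

/-- Terminal vertex of a step. -/
def stepDst (G : WGraph) (p : G.ι × Bool) : G.V := if p.2 then G.dst p.1 else G.src p.1

/-- `G.IsWalk x y l` : the list of steps `l` forms a walk from `x` to `y` in the underlying
undirected graph of `G`. -/
def IsWalk (G : WGraph) : G.V → G.V → List (G.ι × Bool) → Prop
  | x, y, [] => x = y
  | x, y, p :: l => G.stepSrc p = x ∧ G.IsWalk (G.stepDst p) y l

/-- `G.IsDiWalk x y l` : the list of edges `l` forms a directed walk from `x` to `y`. -/
def IsDiWalk (G : WGraph) : G.V → G.V → List G.ι → Prop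
  | x, y, [] => x = y
  | x, y, e :: l => G.src e = x ∧ G.IsDiWalk (G.dst e) y l

/-- The length of a directed walk. -/
def diLen (G : WGraph) (l : List G.ι) : ℝ := (l.map G.len).sum

/-- The weighted shortest-path metric of `G`. -/
noncomputable def gdist (G : WGraph) (x y : G.V) : ℝ :=
  sInf { c : ℝ | ∃ l : List (G.ι × Bool), G.IsWalk x y l ∧
    c = (l.map fun p => G.len p.1).sum }

end WGraph

/-- `G` is an `st`-graph: it has positive edge lengths and thicknesses, it is connected,
its weighted shortest-path metric satisfies `d(s,t) = 1`, every directed path is a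
geodesic, and the thickness function is witnessed by a finite nonempty family of directed
edge paths from `s` to `t` via `th(e) = |{i : e ∈ γ_i}| / |I|`. -/
structure IsSTGraph (G : WGraph) : Prop where
  s_ne_t : G.s ≠ G.t
  len_pos : ∀ e, 0 < G.len e
  th_pos : ∀ e, 0 < G.th e
  conn : ∀ x y : G.V, ∃ l, G.IsWalk x y l
  dist_st : G.gdist G.s G.t = 1
  dir_geodesic : ∀ (x y : G.V) (l : List G.ι), G.IsDiWalk x y l → G.gdist x y = G.diLen l
  th_witness : ∃ (m : ℕ) (γ : Fin (m + 1) → List G.ι),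
    (∀ i, G.IsDiWalk G.s G.t (γ i)) ∧
    ∀ e : G.ι, G.th e = ((Finset.univ.filter fun i => e ∈ γ i).card : ℝ) / (m + 1)

/-- `G` is an `st`-path: it consists of a single directed path from `s` to `t`, and all
edges have thickness `1`. -/
def IsSTPath (G : WGraph) : Prop :=
  ∃ (k : ℕ) (E : Fin k ≃ G.ι) (v : Fin (k + 1) → G.V),
    Function.Bijective v ∧ v 0 = G.s ∧ v (Fin.last k) = G.t ∧
    (∀ i : Fin k, G.src (E i) = v i.castSucc ∧ G.dst (E i) = v i.succ) ∧
    (∀ e, G.th e = 1)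

namespace WGraph

/-- The map sending a vertex of `H` to the corresponding vertex of `G ⊘ H` obtained by
replacing the edge `e` of `G` with a copy of `H` (where `s_H` is identified with the
initial vertex of `e` and `t_H` with the terminal vertex of `e`). -/
def slashEmbed (G H : WGraph) (e : G.ι) (v : H.V) :
    G.V ⊕ (G.ι × {v : H.V // v ≠ H.s ∧ v ≠ H.t}) :=
  if hs : v = H.s then Sum.inl (G.src e)
  else if ht : v = H.t then Sum.inl (G.dst e)
  else Sum.inr (e, ⟨v, hs, ht⟩)

/-- The slash product `G ⊘ H`: every edge of `G` is replaced by a copy of `H`. New edge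
lengths and thicknesses are the products of the corresponding ones of `G` and `H`. -/
def slash (G H : WGraph) : WGraph where
  V := G.V ⊕ (G.ι × {v : H.V // v ≠ H.s ∧ v ≠ H.t})
  ι := G.ι × H.ι
  finV := inferInstance
  decV := inferInstance
  finι := inferInstance
  decι := inferInstance
  src := fun p => slashEmbed G H p.1 (H.src p.2)
  dst := fun p => slashEmbed G H p.1 (H.dst p.2)
  len := fun p => G.len p.1 * H.len p.2
  th := fun p => G.th p.1 * H.th p.2
  s := Sum.inl G.s
  t := Sum.inl G.t

/-- The trivial `st`-path: a single directed edge from `s` to `t` of length 1 and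
thickness 1. -/
def edgeGraph : WGraph where
  V := Bool
  ι := Unit
  finV := inferInstance
  decV := inferInstance
  finι := inferInstance
  decι := inferInstance
  src := fun _ => false
  dst := fun _ => true
  len := fun _ => 1
  th := fun _ => 1
  s := false
  t := true

/-- Slash powers: `G^{⊘0}` is a single directed edge from `s` to `t` of length 1 and
thickness 1, and `G^{⊘(n+1)} = G^{⊘n} ⊘ G`. -/
def slashPow (G : WGraph) : ℕ → WGraph
  | 0 => edgeGraph
  | n + 1 => (G.slashPow n).slash G

end WGraph

/-- The Laakso `st`-graph `La`: obtained from the directed `st`-path with three edges of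
lengths `1/4, 1/2, 1/4` by replacing the middle edge with the `st`-cycle consisting of two
directed paths of two edges each sharing only their endpoints; so `La` has six edges, all
of length `1/4`.
Vertices: `0 = s`, `1 = t`, `2` (after the first outer edge), `3` (before the last outer
edge), and `4`, `5` (the midpoints of the two sides of the cycle).
Edges: `0→2` (thickness 1), `2→4`, `4→3`, `2→5`, `5→3` (thickness 1/2), `3→1`
(thickness 1). -/
noncomputable def laakso : WGraph where
  V := Fin 6
  ι := Fin 6
  finV := inferInstance
  decV := inferInstance
  finι := inferInstance
  decι := inferInstance
  src := ![0, 2, 4, 2, 5, 3]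
  dst := ![2, 4, 3, 5, 3, 1]
  len := fun _ => 1 / 4
  th := ![1, 1 / 2, 1 / 2, 1 / 2, 1 / 2, 1]
  s := 0
  t := 1

/-!
A bi-Lipschitz map of a finite-dimensional normed space into `L₁` can be linearized, losing at most
`ε` of its expansion on finitely many prescribed vectors: mollify it and average the increments
over a large box to find a point at which the derivative is almost as expanding as the map. An
`L₁`-valued linear map on measures is controlled by its values at the point masses, and an
inequality for such maps that is invariant under constants only needs to be checked on cuts.

The vectors tested are the signed sums of the dipoles on the midpoints of the cycles of all
generations, grouped by the thickness `2⁻ʲ` of the edges that these cycles replace. For each choice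
of signs there is a `1`-Lipschitz function that sees every dipole of one group at once, so the
transportation cost norms of the `n` groups, averaged over the signs, add up to at least `n / 2`.
On a cut that crosses edges of total thickness `c`, the dipoles of one group contribute at most
`c`, so by Khinchin's inequality their signed sum is at most `√(2⁻ʲ c)` in mean, and it vanishes
unless `2⁻ʲ ≤ c`. The sum of this geometric series is at most `(2 + √2) c`, independently of `n`.
The thicknesses times the lengths of the edges add up to `1`, so the distortion is at least `(n /
2) / (2 + √2)`.
-/

namespace WGraph

/-- Adjacency in the underlying undirected graph: a step, in either direction along an edge,
leads from `x` to `y`. -/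
def Adj (G : WGraph) (x y : G.V) : Prop := ∃ p, G.stepSrc p = x ∧ G.stepDst p = y

/-- Connectedness of the underlying undirected graph. -/
def Preconnected (G : WGraph) : Prop := ∀ x y, Relation.ReflTransGen G.Adj x y

lemma adj_src_dst (G : WGraph) (e : G.ι) : G.Adj (G.src e) (G.dst e) := ⟨(e, true), rfl, rfl⟩

lemma adj_dst_src (G : WGraph) (e : G.ι) : G.Adj (G.dst e) (G.src e) := ⟨(e, false), rfl, rfl⟩

lemma Adj.exists_edge {G : WGraph} {x y : G.V} (h : G.Adj x y) :
    ∃ e, (G.src e = x ∧ G.dst e = y) ∨ (G.dst e = x ∧ G.src e = y) := by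
  obtain ⟨⟨e, _ | _⟩, hx, hy⟩ := h
  · exact ⟨e, Or.inr ⟨hx, hy⟩⟩
  · exact ⟨e, Or.inl ⟨hx, hy⟩⟩

instance adj_symm (G : WGraph) : Std.Symm G.Adj := by
  refine ⟨fun x y h => ?_⟩
  obtain ⟨e, ⟨rfl, rfl⟩ | ⟨rfl, rfl⟩⟩ := h.exists_edge
  exacts [G.adj_dst_src e, G.adj_src_dst e]

lemma exists_isWalk {G : WGraph} {x y : G.V} (h : Relation.ReflTransGen G.Adj x y) :
    ∃ l, G.IsWalk x y l := by
  induction h using Relation.ReflTransGen.head_induction_on with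
  | refl => exact ⟨[], rfl⟩
  | head hstep _ ih =>
    obtain ⟨p, hp, rfl⟩ := hstep
    obtain ⟨l, hl⟩ := ih
    exact ⟨p :: l, hp, hl⟩

lemma abs_sub_le_of_isWalk {G : WGraph} {h : G.V → ℝ}
    (hh : ∀ e, |h (G.dst e) - h (G.src e)| ≤ G.len e) {x y : G.V} {l : List (G.ι × Bool)}
    (hl : G.IsWalk x y l) : |h x - h y| ≤ (l.map fun p => G.len p.1).sum := by
  induction l generalizing x with
  | nil => cases hl; simp
  | cons p l ih =>
    obtain ⟨rfl, hl⟩ := hl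
    have hstep : |h (G.stepSrc p) - h (G.stepDst p)| ≤ G.len p.1 := by
      obtain ⟨e, _ | _⟩ := p
      · exact hh e
      · exact (abs_sub_comm _ _).trans_le (hh e)
    rw [List.map_cons, List.sum_cons]
    exact (abs_sub_le _ _ _).trans (add_le_add hstep (ih hl))

lemma sum_len_nonneg {G : WGraph} (hlen : ∀ e, 0 ≤ G.len e) (l : List (G.ι × Bool)) :
    0 ≤ (l.map fun p => G.len p.1).sum :=
  List.sum_nonneg (List.forall_mem_map.2 fun p _ => hlen p.1)

lemma gdist_nonneg {G : WGraph} (hlen : ∀ e, 0 ≤ G.len e) (x y : G.V) : 0 ≤ G.gdist x y :=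
  Real.sInf_nonneg (by rintro _ ⟨l, -, rfl⟩; exact sum_len_nonneg hlen l)

lemma gdist_dst_src_le {G : WGraph} (hlen : ∀ e, 0 ≤ G.len e) (e : G.ι) :
    G.gdist (G.dst e) (G.src e) ≤ G.len e :=
  csInf_le ⟨0, by rintro _ ⟨l, -, rfl⟩; exact sum_len_nonneg hlen l⟩
    ⟨[(e, false)], ⟨rfl, rfl⟩, by simp⟩

lemma Preconnected.le_gdist {G : WGraph} (hG : G.Preconnected) {x y : G.V} {c : ℝ}
    (hc : ∀ l, G.IsWalk x y l → c ≤ (l.map fun p => G.len p.1).sum) : c ≤ G.gdist x y := by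
  obtain ⟨l, hl⟩ := exists_isWalk (hG x y)
  exact le_csInf ⟨_, l, hl, rfl⟩ (by rintro _ ⟨l, hl, rfl⟩; exact hc l hl)

lemma Preconnected.abs_sub_le_gdist {G : WGraph} (hG : G.Preconnected) {h : G.V → ℝ}
    (hh : ∀ e, |h (G.dst e) - h (G.src e)| ≤ G.len e) (x y : G.V) :
    |h x - h y| ≤ G.gdist x y :=
  hG.le_gdist fun _ => abs_sub_le_of_isWalk hh

lemma Preconnected.le_gdist_of_ne {G : WGraph} (hG : G.Preconnected) {δ : ℝ} (hδ : 0 ≤ δ)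
    (hlen : ∀ e, δ ≤ G.len e) {x y : G.V} (hxy : x ≠ y) : δ ≤ G.gdist x y := by
  refine hG.le_gdist fun l hl => ?_
  cases l with
  | nil => exact absurd hl hxy
  | cons p l =>
    rw [List.map_cons, List.sum_cons]
    exact le_add_of_le_of_nonneg (hlen p.1)
      (sum_len_nonneg (fun e => hδ.trans (hlen e)) l)

section Slash

variable {G H : WGraph}

lemma slashEmbed_s (e : G.ι) : slashEmbed G H e H.s = Sum.inl (G.src e) := dif_pos rfl

lemma slashEmbed_t (hH : H.s ≠ H.t) (e : G.ι) : slashEmbed G H e H.t = Sum.inl (G.dst e) :=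
  (dif_neg hH.symm).trans (dif_pos rfl)

lemma slashEmbed_of_ne (e : G.ι) (v : {v : H.V // v ≠ H.s ∧ v ≠ H.t}) :
    slashEmbed G H e v = Sum.inr (e, v) :=
  (dif_neg v.2.1).trans (dif_neg v.2.2)

lemma Adj.slashEmbed {u v : H.V} (h : H.Adj u v) (e : G.ι) :
    (G.slash H).Adj (slashEmbed G H e u) (slashEmbed G H e v) := by
  obtain ⟨e', ⟨rfl, rfl⟩ | ⟨rfl, rfl⟩⟩ := h.exists_edge
  · exact adj_src_dst (G.slash H) (e, e')
  · exact adj_dst_src (G.slash H) (e, e')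

theorem Preconnected.slash (hG : G.Preconnected) (hH : H.Preconnected) (hst : H.s ≠ H.t) :
    (G.slash H).Preconnected := by
  have hcopy (e : G.ι) (u v : H.V) :
      Relation.ReflTransGen (G.slash H).Adj (slashEmbed G H e u) (slashEmbed G H e v) :=
    (hH u v).lift (slashEmbed G H e) fun _ _ h => h.slashEmbed e
  have hold (x y : G.V) :
      Relation.ReflTransGen (G.slash H).Adj (Sum.inl x) (Sum.inl y) := by
    refine Relation.ReflTransGen.lift' Sum.inl (fun x y h => ?_) x y (hG x y)
    change Relation.ReflTransGen (G.slash H).Adj (Sum.inl x) (Sum.inl y)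
    obtain ⟨e, ⟨rfl, rfl⟩ | ⟨rfl, rfl⟩⟩ := h.exists_edge
    · simpa only [slashEmbed_s, slashEmbed_t hst] using hcopy e H.s H.t
    · simpa only [slashEmbed_s, slashEmbed_t hst] using hcopy e H.t H.s
  have hto (z : (G.slash H).V) :
      ∃ x : G.V, Relation.ReflTransGen (G.slash H).Adj z (Sum.inl x) ∧
        Relation.ReflTransGen (G.slash H).Adj (Sum.inl x) z := by
    obtain x | ⟨e, v⟩ := z
    · exact ⟨x, .refl, .refl⟩
    · refine ⟨G.src e, ?_⟩
      rw [← slashEmbed_of_ne, ← slashEmbed_s (H := H)]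
      exact ⟨hcopy e _ _, hcopy e _ _⟩
  intro z w
  obtain ⟨x, hzx, -⟩ := hto z
  obtain ⟨y, -, hyw⟩ := hto w
  exact (hzx.trans (hold x y)).trans hyw

lemma sum_th_mul_len_slash (G H : WGraph) :
    ∑ p, (G.slash H).th p * (G.slash H).len p =
      (∑ e, G.th e * G.len e) * ∑ e, H.th e * H.len e := by
  rw [Finset.sum_mul_sum]
  refine (Fintype.sum_prod_type _).trans (sum_congr rfl fun e _ => sum_congr rfl fun e' _ => ?_)
  exact mul_mul_mul_comm _ _ _ _

end Slash

end WGraph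

section Laakso

open WGraph

lemma edgeGraph_preconnected : edgeGraph.Preconnected := by
  rintro (_ | _) (_ | _)
  exacts [.refl, .single (adj_src_dst edgeGraph ()), .single (adj_dst_src edgeGraph ()), .refl]

lemma laakso_preconnected : laakso.Preconnected := by
  have h02 : laakso.Adj (0 : Fin 6) (2 : Fin 6) := adj_src_dst laakso (0 : Fin 6)
  have h24 : laakso.Adj (2 : Fin 6) (4 : Fin 6) := adj_src_dst laakso (1 : Fin 6)
  have h43 : laakso.Adj (4 : Fin 6) (3 : Fin 6) := adj_src_dst laakso (2 : Fin 6)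
  have h25 : laakso.Adj (2 : Fin 6) (5 : Fin 6) := adj_src_dst laakso (3 : Fin 6)
  have h31 : laakso.Adj (3 : Fin 6) (1 : Fin 6) := adj_src_dst laakso (5 : Fin 6)
  have hs : ∀ v : Fin 6, Relation.ReflTransGen laakso.Adj (0 : Fin 6) v := by
    intro v
    fin_cases v
    exacts [.refl, .tail (.tail (.tail (.tail .refl h02) h24) h43) h31, .single h02,
      .tail (.tail (.tail .refl h02) h24) h43, .tail (.single h02) h24, .tail (.single h02) h25]
  exact fun x y => (symm_of (Relation.ReflTransGen laakso.Adj) (hs x)).trans (hs y)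

lemma laakso_s_ne_t : laakso.s ≠ laakso.t := by
  change (0 : Fin 6) ≠ 1
  decide

lemma laakso_forall_edge {P : laakso.V → laakso.V → ℝ → Prop}
    (h02 : P (0 : Fin 6) (2 : Fin 6) 1) (h24 : P (2 : Fin 6) (4 : Fin 6) (1 / 2))
    (h43 : P (4 : Fin 6) (3 : Fin 6) (1 / 2)) (h25 : P (2 : Fin 6) (5 : Fin 6) (1 / 2))
    (h53 : P (5 : Fin 6) (3 : Fin 6) (1 / 2)) (h31 : P (3 : Fin 6) (1 : Fin 6) 1)
    (e : laakso.ι) : P (laakso.src e) (laakso.dst e) (laakso.th e) := by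
  change Fin 6 at e
  fin_cases e
  exacts [h02, h24, h43, h25, h53, h31]

lemma laakso_sum_edge (f : laakso.V → laakso.V → ℝ → ℝ) :
    ∑ e, f (laakso.src e) (laakso.dst e) (laakso.th e) =
      f (0 : Fin 6) (2 : Fin 6) 1 + f (2 : Fin 6) (4 : Fin 6) (1 / 2) +
      f (4 : Fin 6) (3 : Fin 6) (1 / 2) + f (2 : Fin 6) (5 : Fin 6) (1 / 2) +
      f (5 : Fin 6) (3 : Fin 6) (1 / 2) + f (3 : Fin 6) (1 : Fin 6) 1 :=
  Fin.sum_univ_six _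

lemma laakso_th_pos (e : laakso.ι) : 0 < laakso.th e := by
  apply laakso_forall_edge (P := fun _ _ r => 0 < r) <;> norm_num

lemma laakso_th_le_one (e : laakso.ι) : laakso.th e ≤ 1 := by
  apply laakso_forall_edge (P := fun _ _ r => r ≤ 1) <;> norm_num

lemma sum_laakso_th_mul_len : ∑ e, laakso.th e * laakso.len e = 1 := by
  refine (laakso_sum_edge fun _ _ r => r * (1 / 4)).trans ?_
  norm_num

variable (n : ℕ)

lemma slashPow_laakso_preconnected : (laakso.slashPow n).Preconnected := by
  induction n with
  | zero => exact edgeGraph_preconnected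
  | succ n ih => exact ih.slash laakso_preconnected laakso_s_ne_t

lemma slashPow_laakso_len (e : (laakso.slashPow n).ι) :
    (laakso.slashPow n).len e = (1 / 4) ^ n := by
  induction n with
  | zero => exact (pow_zero _).symm
  | succ n ih => rw [pow_succ, ← ih e.1]; rfl

lemma slashPow_laakso_len_pos (e : (laakso.slashPow n).ι) : 0 < (laakso.slashPow n).len e := by
  rw [slashPow_laakso_len]
  positivity

lemma slashPow_laakso_th_pos (e : (laakso.slashPow n).ι) : 0 < (laakso.slashPow n).th e := by
  induction n with
  | zero => exact one_pos
  | succ n ih => exact mul_pos (ih e.1) (laakso_th_pos e.2)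

lemma sum_slashPow_laakso_th_mul_len :
    ∑ e, (laakso.slashPow n).th e * (laakso.slashPow n).len e = 1 := by
  induction n with
  | zero => exact (Fintype.sum_unique (ι := Unit) _).trans (mul_one 1)
  | succ n ih =>
    exact (sum_th_mul_len_slash _ _).trans (by rw [ih, sum_laakso_th_mul_len, mul_one])

end Laakso

section Dipoles

open WGraph

/-- The midpoint of the first side of the cycle of `laakso`, as an inner vertex. -/
def laaksoMid₁ : {v : laakso.V // v ≠ laakso.s ∧ v ≠ laakso.t} :=
  ⟨(4 : Fin 6), show (4 : Fin 6) ≠ 0 ∧ (4 : Fin 6) ≠ 1 by decide⟩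

/-- The midpoint of the second side of the cycle of `laakso`, as an inner vertex. -/
def laaksoMid₂ : {v : laakso.V // v ≠ laakso.s ∧ v ≠ laakso.t} :=
  ⟨(5 : Fin 6), show (5 : Fin 6) ≠ 0 ∧ (5 : Fin 6) ≠ 1 by decide⟩

lemma laakso_abs_sub_st_le (x : laakso.V → ℝ) :
    |x laakso.t - x laakso.s| ≤
      ∑ e, laakso.th e * |x (laakso.dst e) - x (laakso.src e)| := by
  rw [laakso_sum_edge fun u v r => r * |x v - x u|]
  change |x (1 : Fin 6) - x (0 : Fin 6)| ≤ _
  grind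

lemma laakso_abs_sub_mid_le (x : laakso.V → ℝ) :
    |x laaksoMid₁ - x laaksoMid₂| ≤
      ∑ e with laakso.th e < 1, laakso.th e * |x (laakso.dst e) - x (laakso.src e)| := by
  rw [sum_filter, laakso_sum_edge fun u v r => if r < 1 then r * |x v - x u| else 0]
  change |x (4 : Fin 6) - x (5 : Fin 6)| ≤ _
  norm_num only [if_true, if_false]
  grind

/-- The profile of the copies of `laakso` along which `laaksoExtend` interpolates: the fraction
of the way from `s` to `t`. -/
noncomputable def laaksoHeight : laakso.V → ℝ :=
  (![0, 1, 1 / 4, 3 / 4, 1 / 2, 1 / 2] : Fin 6 → ℝ)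

/-- The bump on `laakso` separating the two midpoints of the cycle. -/
noncomputable def laaksoBump : laakso.V → ℝ := (![0, 0, 0, 0, 1, -1] : Fin 6 → ℝ)

/-- The extension of a function `h` on the vertices of `G` to `G ⊘ La` that interpolates `h`
along each copy of `La` and adds `τ e` times the bump on the copy replacing `e`. -/
noncomputable def laaksoExtend {G : WGraph} (h : G.V → ℝ) (τ : G.ι → ℝ) :
    (G.slash laakso).V → ℝ :=
  Sum.elim h fun p => h (G.src p.1) + laaksoHeight p.2 * (h (G.dst p.1) - h (G.src p.1)) +
    laaksoBump p.2 * τ p.1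

variable {G : WGraph}

lemma laaksoExtend_slashEmbed (h : G.V → ℝ) (τ : G.ι → ℝ) (e : G.ι) (v : laakso.V) :
    laaksoExtend h τ (slashEmbed G laakso e v) =
      h (G.src e) + laaksoHeight v * (h (G.dst e) - h (G.src e)) + laaksoBump v * τ e := by
  have hs : laaksoHeight laakso.s = 0 ∧ laaksoBump laakso.s = 0 := ⟨rfl, rfl⟩
  have ht : laaksoHeight laakso.t = 1 ∧ laaksoBump laakso.t = 0 := ⟨rfl, rfl⟩
  unfold slashEmbed
  split_ifs with h1 h2
  · simp [laaksoExtend, h1, hs]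
  · simp [laaksoExtend, h2, ht]
  · rfl

lemma laaksoHeight_dst_sub_src (e : laakso.ι) :
    laaksoHeight (laakso.dst e) - laaksoHeight (laakso.src e) = 1 / 4 := by
  apply laakso_forall_edge (P := fun u v _ => laaksoHeight v - laaksoHeight u = 1 / 4) <;>
    simp [laaksoHeight] <;> norm_num

lemma abs_laaksoBump_dst_sub_src_le (e : laakso.ι) :
    |laaksoBump (laakso.dst e) - laaksoBump (laakso.src e)| ≤ 1 := by
  apply laakso_forall_edge (P := fun u v _ => |laaksoBump v - laaksoBump u| ≤ 1) <;>
    simp [laaksoBump]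

lemma laaksoBump_dst_eq_src {e : laakso.ι} (he : 1 ≤ laakso.th e) :
    laaksoBump (laakso.dst e) = laaksoBump (laakso.src e) := by
  revert he
  apply laakso_forall_edge (P := fun u v r => 1 ≤ r → laaksoBump v = laaksoBump u) <;>
    simp [laaksoBump] <;> norm_num

lemma laaksoExtend_dst_sub_src (h : G.V → ℝ) (τ : G.ι → ℝ) (p : (G.slash laakso).ι) :
    laaksoExtend h τ ((G.slash laakso).dst p) - laaksoExtend h τ ((G.slash laakso).src p) =
      1 / 4 * (h (G.dst p.1) - h (G.src p.1)) +
        (laaksoBump (laakso.dst p.2) - laaksoBump (laakso.src p.2)) * τ p.1 := by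
  change laaksoExtend h τ (slashEmbed G laakso p.1 (laakso.dst p.2)) -
    laaksoExtend h τ (slashEmbed G laakso p.1 (laakso.src p.2)) = _
  rw [laaksoExtend_slashEmbed, laaksoExtend_slashEmbed, ← laaksoHeight_dst_sub_src p.2]
  ring

lemma abs_laaksoExtend_dst_sub_src_le {h : G.V → ℝ} {τ : G.ι → ℝ} {p : (G.slash laakso).ι}
    (hp : h (G.dst p.1) = h (G.src p.1)) :
    |laaksoExtend h τ ((G.slash laakso).dst p) - laaksoExtend h τ ((G.slash laakso).src p)| ≤
      |τ p.1| := by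
  rw [laaksoExtend_dst_sub_src, hp, sub_self, mul_zero, zero_add, abs_mul]
  exact mul_le_of_le_one_left (abs_nonneg _) (abs_laaksoBump_dst_sub_src_le _)

/-- A finite family of weighted pairs of vertices of `G`. In a slash power of `laakso` these
are the pairs of midpoints of the cycles; the `i`-th pair arises from an edge of thickness
`wt i` and length `len i` of a lower power. -/
structure DipoleSystem (G : WGraph) where
  /-- The index set of the pairs. -/
  I : Type
  fintypeI : Fintype I
  decEqI : DecidableEq I
  /-- The first vertex of a pair. -/
  pos : I → G.V
  /-- The second vertex of a pair. -/
  neg : I → G.V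
  /-- The weight of a pair. -/
  wt : I → ℝ
  /-- The length of the edge from which a pair arises. -/
  len : I → ℝ

namespace DipoleSystem

attribute [instance] fintypeI decEqI

/-- The dipole system on `G ⊘ La` consisting of the pairs of `D` and the pairs of midpoints of
the cycles of the new copies of `La`. -/
def refine (D : DipoleSystem G) : DipoleSystem (G.slash laakso) where
  I := D.I ⊕ G.ι
  fintypeI := inferInstance
  decEqI := inferInstance
  pos := Sum.elim (fun i => Sum.inl (D.pos i)) fun e => Sum.inr (e, laaksoMid₁)
  neg := Sum.elim (fun i => Sum.inl (D.neg i)) fun e => Sum.inr (e, laaksoMid₂)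
  wt := Sum.elim D.wt G.th
  len := Sum.elim D.len G.len

/-- The pairs of `D` of any given weight carry at most the variation of a function over the
strictly thinner edges of `G`. -/
def IsTight (D : DipoleSystem G) : Prop :=
  ∀ (r : ℝ) (g : G.V → ℝ), ∑ i with D.wt i = r, r * |g (D.pos i) - g (D.neg i)| ≤
    ∑ e with G.th e < r, G.th e * |g (G.dst e) - g (G.src e)|

/-- For each weight `r`, half of the lengths of the pairs of weight `r`, with arbitrary signs,
are the increments of a `1`-Lipschitz function which is constant on the edges of thickness at
least `r`. -/
def IsFree (D : DipoleSystem G) : Prop :=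
  ∀ (r : ℝ) (σ : D.I → ℝ), (∀ i, |σ i| ≤ 1) → ∃ h : G.V → ℝ,
    (∀ e, |h (G.dst e) - h (G.src e)| ≤ G.len e) ∧
    (∀ e, r ≤ G.th e → h (G.dst e) = h (G.src e)) ∧
    ∀ i, D.wt i = r → h (D.pos i) - h (D.neg i) = σ i * (D.len i / 2)

variable {D : DipoleSystem G}

lemma sum_refine_wt_mul_len :
    ∑ i, D.refine.wt i * D.refine.len i =
      ∑ i, D.wt i * D.len i + ∑ e, G.th e * G.len e :=
  Fintype.sum_sum_type _

lemma edge_add_mid_le {e : G.ι} (he : 0 < G.th e) (r : ℝ) (g : (G.slash laakso).V → ℝ) :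
    (if G.th e < r then G.th e * |g (Sum.inl (G.dst e)) - g (Sum.inl (G.src e))| else 0) +
      (if G.th e = r then r * |g (Sum.inr (e, laaksoMid₁)) - g (Sum.inr (e, laaksoMid₂))|
        else 0) ≤
    ∑ e', if (G.slash laakso).th (e, e') < r then (G.slash laakso).th (e, e') *
      |g ((G.slash laakso).dst (e, e')) - g ((G.slash laakso).src (e, e'))| else 0 := by
  set x : laakso.V → ℝ := fun v => g (slashEmbed G laakso e v)
  change _ ≤ ∑ e', if G.th e * laakso.th e' < r then G.th e * laakso.th e' *
    |x (laakso.dst e') - x (laakso.src e')| else 0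
  rw [← slashEmbed_of_ne, ← slashEmbed_of_ne, ← slashEmbed_t laakso_s_ne_t,
    ← slashEmbed_s (H := laakso)]
  rcases lt_trichotomy (G.th e) r with hlt | rfl | hgt
  · have hthin (e' : laakso.ι) : G.th e * laakso.th e' < r :=
      (mul_le_of_le_one_right he.le (laakso_th_le_one e')).trans_lt hlt
    simp only [hlt, hlt.ne, hthin, if_true, if_false, add_zero, mul_assoc, ← mul_sum]
    exact mul_le_mul_of_nonneg_left (laakso_abs_sub_st_le x) he.le
  · simp only [lt_irrefl, if_true, if_false, zero_add, mul_lt_iff_lt_one_right he, mul_assoc,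
      ← sum_filter, ← mul_sum]
    exact mul_le_mul_of_nonneg_left (laakso_abs_sub_mid_le x) he.le
  · simp only [hgt.not_gt, hgt.ne', if_false, add_zero]
    refine sum_nonneg fun e' _ => ite_nonneg ?_ le_rfl
    exact mul_nonneg (mul_pos he (laakso_th_pos e')).le (abs_nonneg _)

theorem IsTight.refine (hD : D.IsTight) (hth : ∀ e, 0 < G.th e) : D.refine.IsTight := by
  intro r g
  have hold := hD r fun v => g (Sum.inl v)
  simp only [sum_filter] at hold ⊢
  refine (Fintype.sum_sum_type _).trans_le ((add_le_add_left hold _).trans ?_)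
  refine le_trans ?_ (Fintype.sum_prod_type _).ge
  rw [← sum_add_distrib]
  exact sum_le_sum fun e _ => edge_add_mid_le (hth e) r g

theorem IsFree.refine (hD : D.IsFree) (hth : ∀ e, 0 < G.th e) : D.refine.IsFree := by
  intro r σ hσ
  obtain ⟨h, hlip, hconst, hdip⟩ := hD r (fun i => σ (Sum.inl i)) fun i => hσ _
  let τ (e : G.ι) : ℝ := if G.th e = r then σ (Sum.inr e) * (G.len e / 4) else 0
  have hlen (e : G.ι) : 0 ≤ G.len e := (abs_nonneg _).trans (hlip e)
  refine ⟨laaksoExtend h τ, fun p => ?_, fun p hp => ?_, ?_⟩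
  · change _ ≤ G.len p.1 * (1 / 4)
    by_cases hr : G.th p.1 = r
    · calc _ ≤ |τ p.1| := abs_laaksoExtend_dst_sub_src_le (hconst p.1 hr.ge)
        _ = |σ (Sum.inr p.1)| * (G.len p.1 / 4) := by
          rw [show τ p.1 = _ from if_pos hr, abs_mul,
            abs_of_nonneg (div_nonneg (hlen p.1) zero_le_four)]
        _ ≤ 1 * (G.len p.1 / 4) :=
          mul_le_mul_of_nonneg_right (hσ _) (div_nonneg (hlen p.1) zero_le_four)
        _ = G.len p.1 * (1 / 4) := by ring
    · rw [laaksoExtend_dst_sub_src, show τ p.1 = 0 from if_neg hr, mul_zero, add_zero, abs_mul,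
        abs_of_pos (by norm_num), mul_comm]
      exact mul_le_mul_of_nonneg_right (hlip p.1) (by norm_num)
  · change r ≤ G.th p.1 * laakso.th p.2 at hp
    have hr : r ≤ G.th p.1 :=
      hp.trans (mul_le_of_le_one_right (hth p.1).le (laakso_th_le_one p.2))
    rw [← sub_eq_zero, laaksoExtend_dst_sub_src, hconst p.1 hr]
    by_cases heq : G.th p.1 = r
    · have hone : 1 ≤ laakso.th p.2 := (le_mul_iff_one_le_right (hth p.1)).1 (heq.trans_le hp)
      simp [laaksoBump_dst_eq_src hone]
    · simp [τ, heq]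
  · rintro (i | e) hi
    · exact hdip i hi
    · have hτ : τ e = σ (Sum.inr e) * (G.len e / 4) := if_pos hi
      have hmid : laaksoExtend h τ (Sum.inr (e, laaksoMid₁)) -
          laaksoExtend h τ (Sum.inr (e, laaksoMid₂)) = 2 * τ e := by
        simp [laaksoExtend, laaksoHeight, laaksoBump, laaksoMid₁, laaksoMid₂]
        ring
      refine hmid.trans ?_
      rw [hτ]
      change _ = σ (Sum.inr e) * (G.len e / 2)
      ring

end DipoleSystem

/-- All pairs of midpoints of cycles that occur in the construction of `La^{⊘n}`. -/
noncomputable def laaksoDipoles : (n : ℕ) → DipoleSystem (laakso.slashPow n)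
  | 0 => ⟨Empty, inferInstance, inferInstance, Empty.elim, Empty.elim, Empty.elim, Empty.elim⟩
  | n + 1 => (laaksoDipoles n).refine

lemma laaksoDipoles_isTight (n : ℕ) : (laaksoDipoles n).IsTight := by
  induction n with
  | zero =>
    intro r g
    refine (sum_of_isEmpty (ι := Empty) _).trans_le (sum_nonneg fun e _ => ?_)
    exact mul_nonneg (slashPow_laakso_th_pos 0 e).le (abs_nonneg _)
  | succ n ih => exact ih.refine (slashPow_laakso_th_pos n)

lemma laaksoDipoles_isFree (n : ℕ) : (laaksoDipoles n).IsFree := by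
  induction n with
  | zero =>
    refine fun r σ _ => ⟨0, fun e => ?_, fun e _ => rfl, fun i => i.elim⟩
    simpa using (slashPow_laakso_len_pos 0 e).le
  | succ n ih => exact ih.refine (slashPow_laakso_th_pos n)

lemma sum_laaksoDipoles_wt_mul_len (n : ℕ) :
    ∑ i, (laaksoDipoles n).wt i * (laaksoDipoles n).len i = n := by
  induction n with
  | zero => exact (Fintype.sum_empty (ι := Empty) _).trans Nat.cast_zero.symm
  | succ n ih =>
    refine DipoleSystem.sum_refine_wt_mul_len.trans ?_
    rw [ih, sum_slashPow_laakso_th_mul_len, Nat.cast_succ]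

lemma slashPow_laakso_th_eq_pow (n : ℕ) (e : (laakso.slashPow n).ι) :
    ∃ j ≤ n, (laakso.slashPow n).th e = (1 / 2) ^ j := by
  induction n with
  | zero => exact ⟨0, le_rfl, (pow_zero _).symm⟩
  | succ n ih =>
    obtain ⟨j, hj, hth⟩ := ih e.1
    have hla : laakso.th e.2 = 1 ∨ laakso.th e.2 = 1 / 2 := by
      apply laakso_forall_edge (P := fun _ _ r => r = 1 ∨ r = 1 / 2) <;> norm_num
    have hmul : (laakso.slashPow (n + 1)).th e = (laakso.slashPow n).th e.1 * laakso.th e.2 :=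
      rfl
    rcases hla with hla | hla
    · exact ⟨j, hj.trans n.le_succ, by rw [hmul, hth, hla, mul_one]⟩
    · exact ⟨j + 1, Nat.succ_le_succ hj, by rw [hmul, hth, hla, pow_succ]⟩

lemma laaksoDipoles_wt_eq_pow (n : ℕ) (i : (laaksoDipoles n).I) :
    ∃ j < n, (laaksoDipoles n).wt i = (1 / 2) ^ j := by
  induction n with
  | zero => exact i.elim
  | succ n ih =>
    obtain i | e := i
    · obtain ⟨j, hj, hwt⟩ := ih i
      exact ⟨j, hj.trans n.lt_succ_self, hwt⟩
    · obtain ⟨j, hj, hth⟩ := slashPow_laakso_th_eq_pow n e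
      exact ⟨j, Nat.lt_succ_of_le hj, hth⟩

end Dipoles

section Signs

variable {I : Type*} [Fintype I] [DecidableEq I]

lemma sum_sign_mul_sign {i k : I} (hik : i ≠ k) :
    ∑ σ : I → ℤˣ, ((σ i : ℤ) : ℝ) * ((σ k : ℤ) : ℝ) = 0 := by
  have hflip := Equiv.sum_comp (Equiv.mulLeft (Pi.mulSingle i (-1) : I → ℤˣ))
    fun σ => ((σ i : ℤ) : ℝ) * ((σ k : ℤ) : ℝ)
  simp only [Equiv.coe_mulLeft, Pi.mul_apply, Pi.mulSingle_eq_same,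
    Pi.mulSingle_eq_of_ne' hik, one_mul, neg_mul, Units.val_neg, Int.cast_neg,
    sum_neg_distrib] at hflip
  linarith

lemma sum_sq_sum_sign_mul (s : Finset I) (x : I → ℝ) :
    ∑ σ : I → ℤˣ, (∑ i ∈ s, ((σ i : ℤ) : ℝ) * x i) ^ 2 =
      Fintype.card (I → ℤˣ) * ∑ i ∈ s, x i ^ 2 := by
  have hexpand (σ : I → ℤˣ) : (∑ i ∈ s, ((σ i : ℤ) : ℝ) * x i) ^ 2 =
      ∑ i ∈ s, ∑ k ∈ s, ((σ i : ℤ) : ℝ) * ((σ k : ℤ) : ℝ) * (x i * x k) := by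
    rw [sq, sum_mul_sum]
    exact sum_congr rfl fun i _ => sum_congr rfl fun k _ => mul_mul_mul_comm _ _ _ _
  have hsq (σ : I → ℤˣ) (i : I) : ((σ i : ℤ) : ℝ) * ((σ i : ℤ) : ℝ) = 1 := by
    rw [← Int.cast_mul, ← Units.val_mul, Int.units_mul_self, Units.val_one, Int.cast_one]
  simp only [hexpand]
  rw [sum_comm, mul_sum]
  refine sum_congr rfl fun i hi => ?_
  rw [sum_comm, sum_eq_single_of_mem i hi]
  · simp only [hsq, one_mul, sum_const, card_univ, nsmul_eq_mul, sq]
  · intro k _ hk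
    rw [← sum_mul, sum_sign_mul_sign hk.symm, zero_mul]

/-- The upper Khinchin inequality for the first moment. -/
lemma sum_abs_sum_sign_mul_le (s : Finset I) (x : I → ℝ) :
    ∑ σ : I → ℤˣ, |∑ i ∈ s, ((σ i : ℤ) : ℝ) * x i| ≤
      Fintype.card (I → ℤˣ) * √(∑ i ∈ s, x i ^ 2) := by
  have hcs := sq_sum_le_card_mul_sum_sq (s := univ)
    (f := fun σ : I → ℤˣ => |∑ i ∈ s, ((σ i : ℤ) : ℝ) * x i|)
  simp only [sq_abs, sum_sq_sum_sign_mul, card_univ] at hcs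
  refine abs_le_of_sq_le_sq' (hcs.trans_eq ?_) (by positivity) |>.2
  rw [mul_pow, Real.sq_sqrt (sum_nonneg fun i _ => sq_nonneg _), sq, mul_assoc]

end Signs

lemma sqrt_sum_sq_le {I : Type*} {s : Finset I} {x : I → ℝ} {r c : ℝ} (hr : 0 < r)
    (hx : ∀ i ∈ s, |x i| = 0 ∨ |x i| = r) (hsum : ∑ i ∈ s, |x i| ≤ c) :
    √(∑ i ∈ s, x i ^ 2) ≤ if r ≤ c then √(r * c) else 0 := by
  split_ifs with hrc
  · refine Real.sqrt_le_sqrt ?_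
    calc ∑ i ∈ s, x i ^ 2 = r * ∑ i ∈ s, |x i| := by
          rw [mul_sum]
          refine sum_congr rfl fun i hi => ?_
          rw [← sq_abs]
          obtain h | h := hx i hi <;> rw [h] <;> ring
      _ ≤ r * c := mul_le_mul_of_nonneg_left hsum hr.le
  · refine (Real.sqrt_eq_zero'.2 (sum_nonpos fun i hi => ?_)).le
    have hi' : |x i| = 0 := (hx i hi).resolve_right fun h =>
      hrc (h ▸ (single_le_sum (fun i _ => abs_nonneg (x i)) hi).trans hsum)
    rw [← sq_abs, hi', sq, mul_zero]

lemma sum_filter_pow_le {r c : ℝ} (hr₀ : 0 ≤ r) (hr₁ : r < 1) (hc : 0 ≤ c) (n : ℕ) :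
    ∑ j ∈ range n with r ^ j ≤ c, r ^ j ≤ c / (1 - r) := by
  obtain hempty | hne := (filter (fun j => r ^ j ≤ c) (range n)).eq_empty_or_nonempty
  · rw [hempty, sum_empty]
    exact div_nonneg hc (sub_nonneg.2 hr₁.le)
  · set m := min' _ hne
    calc ∑ j ∈ range n with r ^ j ≤ c, r ^ j ≤ ∑ j ∈ Ico m n, r ^ j := by
          refine sum_le_sum_of_subset_of_nonneg (fun j hj => ?_) fun j _ _ => pow_nonneg hr₀ j
          exact mem_Ico.2 ⟨min'_le _ _ hj, mem_range.1 (mem_filter.1 hj).1⟩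
      _ ≤ r ^ m / (1 - r) := geom_sum_Ico_le_of_lt_one hr₀ hr₁
      _ ≤ c / (1 - r) :=
          div_le_div_of_nonneg_right (mem_filter.1 (min'_mem _ hne)).2 (sub_nonneg.2 hr₁.le)

lemma sum_sqrt_half_pow_mul_le {c : ℝ} (hc : 0 ≤ c) (n : ℕ) :
    ∑ j ∈ range n, (if (1 / 2) ^ j ≤ c then √((1 / 2) ^ j * c) else 0) ≤ (2 + √2) * c := by
  set q : ℝ := √(1 / 2) with hq
  have hsqrt2 : √2 * √2 = 2 := Real.mul_self_sqrt zero_le_two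
  have hq_eq : q = √2 / 2 := by
    rw [hq, Real.sqrt_eq_iff_mul_self_eq (by norm_num) (by positivity)]
    linear_combination -hsqrt2 / 4
  have hq₁ : q < 1 := by
    rw [hq, Real.sqrt_lt' one_pos]
    norm_num
  have hpow (j : ℕ) : √((1 / 2) ^ j) = q ^ j := by
    rw [Real.sqrt_eq_iff_mul_self_eq (by positivity) (by positivity), ← mul_pow,
      Real.mul_self_sqrt (by norm_num)]
  have hterm (j : ℕ) : (if (1 / 2) ^ j ≤ c then √((1 / 2) ^ j * c) else 0) =
      √c * if q ^ j ≤ √c then q ^ j else 0 := by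
    simp only [← hpow, Real.sqrt_le_sqrt_iff hc, mul_ite, mul_zero]
    rw [mul_comm, Real.sqrt_mul hc]
  calc _ = √c * ∑ j ∈ range n with q ^ j ≤ √c, q ^ j := by
        rw [sum_filter, mul_sum]
        exact sum_congr rfl fun j _ => hterm j
    _ ≤ √c * (√c / (1 - q)) :=
        mul_le_mul_of_nonneg_left
          (sum_filter_pow_le (Real.sqrt_nonneg _) hq₁ (Real.sqrt_nonneg c) n) (Real.sqrt_nonneg c)
    _ = (2 + √2) * c := by
        rw [← mul_div_assoc, Real.mul_self_sqrt hc, div_eq_iff (sub_ne_zero.2 hq₁.ne'), hq_eq]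
        linear_combination c / 2 * hsqrt2

section Cuts

variable {V : Type*}

lemma eq_min_add_mul_indicator {g : V → ℝ} {a b : ℝ} (hba : b < a)
    (hg : ∀ v, g v = a ∨ g v ≤ b) (v : V) :
    g v = min (g v) b + (a - b) * {v | g v = a}.indicator 1 v := by
  obtain h | h := hg v
  · rw [Set.indicator_of_mem (show v ∈ {v | g v = a} from h), h, min_eq_right hba.le,
      Pi.one_apply]
    ring
  · rw [Set.indicator_of_notMem (show v ∉ {v | g v = a} from (h.trans_lt hba).ne),
      min_eq_left h, mul_zero, add_zero]

lemma abs_sub_eq_abs_min_sub_min_add {g : V → ℝ} {a b : ℝ} (hba : b < a)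
    (hg : ∀ v, g v = a ∨ g v ≤ b) (u v : V) :
    |g u - g v| = |min (g u) b - min (g v) b| +
      (a - b) * |{v | g v = a}.indicator (1 : V → ℝ) u - {v | g v = a}.indicator 1 v| := by
  have htop {v : V} (h : g v = a) : {v | g v = a}.indicator (1 : V → ℝ) v = 1 :=
    Set.indicator_of_mem (s := {v | g v = a}) h _
  have hlow {v : V} (h : g v ≤ b) : {v | g v = a}.indicator (1 : V → ℝ) v = 0 :=
    Set.indicator_of_notMem (s := {v | g v = a}) (h.trans_lt hba).ne _
  obtain hu | hu := hg u <;> obtain hv | hv := hg v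
  · simp only [htop, hu, hv, sub_self, abs_zero, mul_zero, add_zero]
  · rw [htop hu, hlow hv, hu, min_eq_right hba.le, min_eq_left hv, abs_of_pos (by linarith),
      abs_of_nonneg (by linarith), sub_zero, abs_one]
    ring
  · rw [hlow hu, htop hv, hv, min_eq_left hu, min_eq_right hba.le, abs_of_neg (by linarith),
      abs_of_nonpos (by linarith), zero_sub, abs_neg, abs_one]
    ring
  · rw [hlow hu, hlow hv, min_eq_left hu, min_eq_left hv, sub_self, abs_zero, mul_zero, add_zero]

variable [Fintype V] {K ι : Type*} [Fintype K] [Fintype ι]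

lemma abs_sum_mul_le_abs_sum_mul_min_add (μ : V → ℝ) {g : V → ℝ} {a b : ℝ} (hba : b < a)
    (hg : ∀ v, g v = a ∨ g v ≤ b) :
    |∑ v, μ v * g v| ≤
      |∑ v, μ v * min (g v) b| + (a - b) * |∑ v, μ v * {v | g v = a}.indicator 1 v| := by
  nth_rewrite 1 [← abs_of_pos (sub_pos.2 hba)]
  rw [← abs_mul, mul_sum]
  refine le_of_eq_of_le (congrArg _ ?_) (abs_add_le _ _)
  rw [← sum_add_distrib]
  refine sum_congr rfl fun v _ => ?_
  linear_combination μ v * eq_min_add_mul_indicator hba hg v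

lemma sum_abs_pairing_le_of_min {μ : K → V → ℝ} {w : ι → ℝ} {p q : ι → V} {g : V → ℝ} {a b : ℝ}
    (hba : b < a) (hg : ∀ v, g v = a ∨ g v ≤ b)
    (hmin : ∑ k, |∑ v, μ k v * min (g v) b| ≤
      ∑ e, w e * |min (g (p e)) b - min (g (q e)) b|)
    (htop : ∑ k, |∑ v, μ k v * {v | g v = a}.indicator 1 v| ≤
      ∑ e, w e * |{v | g v = a}.indicator 1 (p e) - {v | g v = a}.indicator 1 (q e)|) :
    ∑ k, |∑ v, μ k v * g v| ≤ ∑ e, w e * |g (p e) - g (q e)| := by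
  set S : Set V := {v | g v = a}
  calc ∑ k, |∑ v, μ k v * g v|
      ≤ ∑ k, |∑ v, μ k v * min (g v) b| + (a - b) * ∑ k, |∑ v, μ k v * S.indicator 1 v| := by
        rw [mul_sum, ← sum_add_distrib]
        exact sum_le_sum fun k _ => abs_sum_mul_le_abs_sum_mul_min_add (μ k) hba hg
    _ ≤ ∑ e, w e * |min (g (p e)) b - min (g (q e)) b| +
        (a - b) * ∑ e, w e * |S.indicator 1 (p e) - S.indicator 1 (q e)| :=
        add_le_add hmin (mul_le_mul_of_nonneg_left htop (sub_pos.2 hba).le)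
    _ = ∑ e, w e * |g (p e) - g (q e)| := by
        rw [mul_sum, ← sum_add_distrib]
        refine sum_congr rfl fun e _ => ?_
        rw [abs_sub_eq_abs_min_sub_min_add hba hg]
        ring

/-- A function with finitely many values is a combination of cuts: the induction peels off the
top level set. -/
theorem sum_abs_pairing_le_of_indicator {μ : K → V → ℝ} (hμ : ∀ k, ∑ v, μ k v = 0)
    {w : ι → ℝ} {p q : ι → V}
    (hcut : ∀ S : Set V, ∑ k, |∑ v, μ k v * S.indicator 1 v| ≤
      ∑ e, w e * |S.indicator 1 (p e) - S.indicator 1 (q e)|) (g : V → ℝ) :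
    ∑ k, |∑ v, μ k v * g v| ≤ ∑ e, w e * |g (p e) - g (q e)| := by
  suffices h : ∀ (s : Finset ℝ) (g : V → ℝ), (∀ v, g v ∈ s) →
      ∑ k, |∑ v, μ k v * g v| ≤ ∑ e, w e * |g (p e) - g (q e)| from
    h (univ.image g) g fun v => mem_image_of_mem g (mem_univ v)
  intro s
  induction s using Finset.induction_on_max with
  | empty =>
    intro g hg
    have : IsEmpty V := ⟨fun v => notMem_empty _ (hg v)⟩
    have : IsEmpty ι := ⟨fun e => isEmptyElim (p e)⟩
    simp
  | insert a s hs ih =>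
    intro g hg
    obtain rfl | hne := s.eq_empty_or_nonempty
    · obtain rfl : g = fun _ => a := funext fun v => by simpa using hg v
      simp [← sum_mul, hμ]
    set b := s.max' hne
    have hba : b < a := hs b (s.max'_mem hne)
    have hmem (v : V) : g v = a ∨ g v ∈ s := mem_insert.1 (hg v)
    have htop (v : V) : g v = a ∨ g v ≤ b := (hmem v).imp_right (s.le_max' _)
    have hmin (v : V) : min (g v) b ∈ s := by
      obtain h | h := hmem v
      · rw [h, min_eq_right hba.le]
        exact s.max'_mem hne
      · rwa [min_eq_left (s.le_max' _ h)]
    exact sum_abs_pairing_le_of_min hba htop (ih _ hmin) (hcut _)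

end Cuts

namespace DipoleSystem

variable {G : WGraph} (D : DipoleSystem G)

/-- The signed combination of the dipoles of weight `r`, each of them multiplied by `r`. -/
noncomputable def signedMeasure (r : ℝ) (σ : D.I → ℤˣ) (v : G.V) : ℝ :=
  ∑ i with D.wt i = r,
    ((σ i : ℤ) : ℝ) *
      (r * ((Pi.single (D.pos i) 1 : G.V → ℝ) v - (Pi.single (D.neg i) 1 : G.V → ℝ) v))

lemma sum_signedMeasure_mul (r : ℝ) (σ : D.I → ℤˣ) (g : G.V → ℝ) :
    ∑ v, D.signedMeasure r σ v * g v =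
      ∑ i with D.wt i = r, ((σ i : ℤ) : ℝ) * (r * (g (D.pos i) - g (D.neg i))) := by
  simp only [signedMeasure, sum_mul]
  rw [sum_comm]
  refine sum_congr rfl fun i _ => ?_
  simp only [mul_assoc, ← mul_sum, sub_mul, sum_sub_distrib, Pi.single_apply, ite_mul, one_mul,
    zero_mul, sum_ite_eq', mem_univ, if_true]

lemma sum_signedMeasure (r : ℝ) (σ : D.I → ℤˣ) : ∑ v, D.signedMeasure r σ v = 0 := by
  simpa using D.sum_signedMeasure_mul r σ 1

variable {D}

lemma IsTight.sum_abs_pairing_indicator_le (hD : D.IsTight) (hth : ∀ e, 0 ≤ G.th e) {r : ℝ}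
    (hr : 0 < r) (S : Set G.V) :
    ∑ σ, |∑ v, D.signedMeasure r σ v * S.indicator 1 v| ≤
      Fintype.card (D.I → ℤˣ) *
        if r ≤ ∑ e, G.th e * |S.indicator 1 (G.dst e) - S.indicator 1 (G.src e)|
        then √(r * ∑ e, G.th e * |S.indicator 1 (G.dst e) - S.indicator 1 (G.src e)|)
        else 0 := by
  simp only [sum_signedMeasure_mul]
  refine (sum_abs_sum_sign_mul_le _ _).trans ?_
  refine mul_le_mul_of_nonneg_left (sqrt_sum_sq_le hr (fun i _ => ?_) ?_) (Nat.cast_nonneg _)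
  · by_cases hp : D.pos i ∈ S <;> by_cases hn : D.neg i ∈ S <;> simp [hp, hn, hr.le]
  · simp only [abs_mul, abs_of_pos hr]
    refine (hD r _).trans (sum_le_sum_of_subset_of_nonneg (filter_subset _ _) fun e _ _ => ?_)
    exact mul_nonneg (hth e) (abs_nonneg _)

/-- Random signs and the geometric decay of the weights turn `n` layers of dipoles into a single
total variation. -/
theorem IsTight.sum_abs_pairing_le (hD : D.IsTight) (hth : ∀ e, 0 ≤ G.th e) (n : ℕ)
    (g : G.V → ℝ) :
    ∑ k : Fin n × (D.I → ℤˣ), |∑ v, D.signedMeasure ((1 / 2) ^ (k.1 : ℕ)) k.2 v * g v| ≤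
      ∑ e, Fintype.card (D.I → ℤˣ) * (2 + √2) * G.th e * |g (G.dst e) - g (G.src e)| := by
  refine sum_abs_pairing_le_of_indicator (fun k => D.sum_signedMeasure _ _) (fun S => ?_) g
  set c := ∑ e, G.th e * |S.indicator 1 (G.dst e) - S.indicator 1 (G.src e)| with hc
  have hc₀ : 0 ≤ c := sum_nonneg fun e _ => mul_nonneg (hth e) (abs_nonneg _)
  calc _ = ∑ j ∈ range n, ∑ σ,
        |∑ v, D.signedMeasure ((1 / 2) ^ j) σ v * S.indicator 1 v| := by
        rw [Fintype.sum_prod_type, Finset.sum_range]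
    _ ≤ ∑ j ∈ range n, Fintype.card (D.I → ℤˣ) *
          (if (1 / 2) ^ j ≤ c then √((1 / 2) ^ j * c) else 0) :=
        sum_le_sum fun j _ => hD.sum_abs_pairing_indicator_le hth (by positivity) S
    _ ≤ Fintype.card (D.I → ℤˣ) * ((2 + √2) * c) := by
        rw [← mul_sum]
        exact mul_le_mul_of_nonneg_left (sum_sqrt_half_pow_mul_le hc₀ n) (Nat.cast_nonneg _)
    _ = _ := by
        simp only [hc, mul_sum, mul_assoc]

end DipoleSystem

section Linearization

open Filter Topology Asymptotics

lemma exists_sum_le_sum_box {A K : Type*} [AddCommMonoid A] [Fintype K] {M : ℕ} [NeZero M]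
    {v : K → A} {F : K → A → ℝ} {c : K → ℝ}
    (hc : ∀ k y, M * c k ≤ ∑ i : Fin M, F k (y + (i : ℕ) • v k)) :
    ∃ m : K → Fin M, ∑ k, c k ≤ ∑ k, F k (∑ j, (m j : ℕ) • v j) := by
  classical
  have hline (k : K) :
      ∑ _m : K → Fin M, c k ≤ ∑ m : K → Fin M, F k (∑ j, (m j : ℕ) • v j) := by
    rw [← (Equiv.funSplitAt k (Fin M)).symm.sum_comp fun _ => c k,
      ← (Equiv.funSplitAt k (Fin M)).symm.sum_comp, Fintype.sum_prod_type_right,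
      Fintype.sum_prod_type_right]
    refine sum_le_sum fun r _ => ?_
    have hsplit (i : Fin M) :
        ∑ j, ((Equiv.funSplitAt k (Fin M)).symm (i, r) j : ℕ) • v j =
          ∑ j : {j // j ≠ k}, (r j : ℕ) • v j + (i : ℕ) • v k := by
      rw [Fintype.sum_eq_add_sum_subtype_ne _ k, add_comm]
      congr 1
      · exact sum_congr rfl fun j _ => by simp [Equiv.funSplitAt, Equiv.piSplitAt, j.2]
      · simp [Equiv.funSplitAt, Equiv.piSplitAt]
    simp only [hsplit]
    simpa using hc k (∑ j : {j // j ≠ k}, (r j : ℕ) • v j)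
  have htotal : ∑ _m : K → Fin M, ∑ k, c k ≤
      ∑ m : K → Fin M, ∑ k, F k (∑ j, (m j : ℕ) • v j) := by
    rw [sum_comm, sum_comm (s := univ (α := K → Fin M))]
    exact sum_le_sum fun k _ => hline k
  obtain ⟨m, -, hm⟩ := exists_le_of_sum_le univ_nonempty htotal
  exact ⟨m, hm⟩

lemma norm_add_nsmul_sub_le {A X : Type*} [AddMonoid A] [SeminormedAddCommGroup X]
    (g : A → X) (y v : A) (M : ℕ) :
    ‖g (y + M • v) - g y‖ ≤ ∑ i : Fin M, ‖g (y + (i : ℕ) • v + v) - g (y + (i : ℕ) • v)‖ := by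
  have htelescope := sum_range_sub (fun i : ℕ => g (y + i • v)) M
  rw [zero_smul, add_zero] at htelescope
  rw [← htelescope, ← Finset.sum_range fun i => ‖g (y + i • v + v) - g (y + i • v)‖]
  simp only [succ_nsmul, ← add_assoc]
  exact norm_sum_le _ _

/-- Large increments along each of the segments `[y, y + M • v k]` force simultaneously large
increments along the `v k` at some lattice point: average over the box spanned by the `v k`. -/
lemma exists_sum_le_sum_norm_add_sub {A X K : Type*} [SeminormedAddCommGroup A]
    [SeminormedAddCommGroup X] [Fintype K] {g : A → X} {M : ℕ} [NeZero M]
    {v : K → A} {c : K → ℝ} (hc : ∀ k y, M * c k ≤ ‖g (y + M • v k) - g y‖) :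
    ∃ x : A, ‖x‖ ≤ M * ∑ k, ‖v k‖ ∧ ∑ k, c k ≤ ∑ k, ‖g (x + v k) - g x‖ := by
  obtain ⟨m, hm⟩ := exists_sum_le_sum_box (F := fun k y => ‖g (y + v k) - g y‖)
    fun k y => (hc k y).trans (norm_add_nsmul_sub_le g y (v k) M)
  refine ⟨_, (norm_sum_le _ _).trans ?_, hm⟩
  rw [mul_sum]
  refine sum_le_sum fun j _ => (norm_nsmul_le).trans ?_
  exact mul_le_mul_of_nonneg_right (Nat.cast_le.2 (m j).2.le) (norm_nonneg _)

variable {P X : Type*} [NormedAddCommGroup P] [NormedSpace ℝ P] [NormedAddCommGroup X]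
  [NormedSpace ℝ X]

lemma tendsto_inv_smul_sub_of_hasStrictFDerivAt {g : P → X} {g' : P →L[ℝ] X} {z : P}
    (hg : HasStrictFDerivAt g g' z) {α : Type*} {l : Filter α} {x : α → P} {h : α → ℝ}
    (hx : Tendsto x l (𝓝 z)) (hh : Tendsto h l (𝓝 0)) (hh₀ : ∀ i, h i ≠ 0) (u : P) :
    Tendsto (fun i => (h i)⁻¹ • (g (x i + h i • u) - g (x i))) l (𝓝 (g' u)) := by
  have hpair : Tendsto (fun i => (x i + h i • u, x i)) l (𝓝 (z, z)) := by
    refine Tendsto.prodMk_nhds ?_ hx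
    simpa using hx.add (hh.smul_const u)
  have hbigO : (fun i => x i + h i • u - x i) =O[l] h :=
    IsBigO.of_bound ‖u‖ (Eventually.of_forall fun i => by
      rw [add_sub_cancel_left, norm_smul, mul_comm])
  have hzero := ((hg.isLittleO.comp_tendsto hpair).trans_isBigO
    hbigO).tendsto_inv_smul_nhds_zero.add_const (g' u)
  rw [zero_add] at hzero
  refine hzero.congr fun i => ?_
  simp [smul_sub, inv_smul_smul₀ (hh₀ i)]

lemma norm_apply_le_of_hasFDerivAt {g : P → X} {g' : P →L[ℝ] X} {z v : P} {b : ℝ}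
    (hg : HasFDerivAt g g' z) (hb : ∀ t : ℝ, 0 < t → ‖g (z + t • v) - g z‖ ≤ t * b) :
    ‖g' v‖ ≤ b := by
  refine le_of_tendsto (hg.lim_real v).norm ?_
  filter_upwards [eventually_gt_atTop 0] with c hc
  rw [norm_smul, Real.norm_of_nonneg hc.le, ← le_inv_mul_iff₀ hc]
  exact hb c⁻¹ (inv_pos.2 hc)

variable [FiniteDimensional ℝ P]

/-- The witness is a convolution with a smooth bump: it averages translates of `f`, so it inherits
the bounds on the increments of `f`. -/
lemma exists_contDiff_of_lipschitzWith [CompleteSpace X] {L : NNReal} {f : P → X}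
    (hf : LipschitzWith L f) :
    ∃ g : P → X, ContDiff ℝ 1 g ∧
      (∀ v b, (∀ x, ‖f (x + v) - f x‖ ≤ b) → ∀ x, ‖g (x + v) - g x‖ ≤ b) ∧
      ∃ B, ∀ x, ‖g x - f x‖ ≤ B := by
  borelize P
  let vol : Measure P := Measure.addHaar
  let φ : ContDiffBump (0 : P) := ⟨1, 2, one_pos, one_lt_two⟩
  have hint (x : P) : Integrable (fun t => φ.normed vol t • f (x - t)) vol :=
    φ.hasCompactSupport_normed.convolutionExists_left_of_continuous_right
      (ContinuousLinearMap.lsmul ℝ ℝ) φ.integrable_normed.locallyIntegrable hf.continuous x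
  refine ⟨convolution (φ.normed vol) f (ContinuousLinearMap.lsmul ℝ ℝ) vol, ?_, ?_, L * 2, ?_⟩
  · exact φ.hasCompactSupport_normed.contDiff_convolution_left (n := 1)
      (ContinuousLinearMap.lsmul ℝ ℝ) φ.contDiff_normed hf.continuous.locallyIntegrable
  · intro v b hb x
    calc ‖∫ t, φ.normed vol t • f (x + v - t) ∂vol - ∫ t, φ.normed vol t • f (x - t) ∂vol‖
        = ‖∫ t, φ.normed vol t • (f (x - t + v) - f (x - t)) ∂vol‖ := by
          rw [← integral_sub (hint _) (hint _)]
          simp only [smul_sub, sub_add_eq_add_sub]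
      _ ≤ ∫ t, φ.normed vol t * b ∂vol := by
          refine norm_integral_le_of_norm_le (φ.integrable_normed.mul_const b)
            (Eventually.of_forall fun t => ?_)
          rw [norm_smul, Real.norm_of_nonneg (φ.nonneg_normed t)]
          exact mul_le_mul_of_nonneg_left (hb _) (φ.nonneg_normed t)
      _ = b := by rw [integral_mul_const, φ.integral_normed, one_mul]
  · intro x
    rw [← dist_eq_norm]
    refine φ.dist_normed_convolution_le hf.continuous.aestronglyMeasurable fun y hy => ?_
    exact (hf.dist_le_mul y x).trans
      (mul_le_mul_of_nonneg_left (Metric.mem_ball.1 hy).le L.coe_nonneg)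

variable {K : Type*} [Fintype K]

lemma exists_sum_le_sum_norm_fderiv {g : P → X} (hg : ContDiff ℝ 1 g) {R : ℝ} (hR : 0 < R)
    {u : K → P} {a : K → ℝ} (ha : ∀ k y, R * a k ≤ ‖g (y + R • u k) - g y‖) :
    ∃ z, ∑ k, a k ≤ ∑ k, ‖fderiv ℝ g z (u k)‖ := by
  set h : ℕ → ℝ := fun i => R * (1 / ((i : ℝ) + 1)) with hh
  have hpos (i : ℕ) : 0 < h i := mul_pos hR Nat.one_div_pos_of_nat
  have hmul (i : ℕ) : ((i + 1 : ℕ) : ℝ) * h i = R := by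
    rw [hh]
    push_cast
    field_simp
  have hstep (i : ℕ) : ∃ x : P, ‖x‖ ≤ R * ∑ k, ‖u k‖ ∧
      ∑ k, a k ≤ ∑ k, ‖(h i)⁻¹ • (g (x + h i • u k) - g x)‖ := by
    obtain ⟨x, hx, hsum⟩ := exists_sum_le_sum_norm_add_sub (g := g) (M := i + 1)
      (v := fun k => h i • u k) (c := fun k => h i * a k) fun k y => by
        rw [← mul_assoc, ← Nat.cast_smul_eq_nsmul ℝ, smul_smul, hmul]
        exact ha k y
    simp only [norm_smul, Real.norm_of_nonneg (hpos i).le, ← mul_sum, ← mul_assoc, hmul] at hx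
    refine ⟨x, hx, ?_⟩
    simp only [norm_smul, Real.norm_of_nonneg (inv_pos.2 (hpos i)).le, ← mul_sum]
    rwa [le_inv_mul_iff₀ (hpos i), mul_sum]
  choose x hx hsum using hstep
  obtain ⟨z, -, φ, hφ, hlim⟩ := (isCompact_closedBall (0 : P) (R * ∑ k, ‖u k‖)).tendsto_subseq
    fun i => mem_closedBall_zero_iff.2 (hx i)
  have hh₀ : Tendsto h atTop (𝓝 0) := by
    simpa only [mul_zero] using tendsto_one_div_add_atTop_nhds_zero_nat.const_mul R
  have hstrict := hg.contDiffAt (x := z).hasStrictFDerivAt one_ne_zero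
  refine ⟨z, ge_of_tendsto (tendsto_finsetSum _ fun k _ =>
    (tendsto_inv_smul_sub_of_hasStrictFDerivAt hstrict hlim (hh₀.comp hφ.tendsto_atTop)
      (fun i => (hpos _).ne') (u k)).norm) (Eventually.of_forall fun i => hsum (φ i))⟩

/-- `T` is the derivative of a mollification of `f`, taken at a point where the mollification is
almost as expanding as `f`. -/
theorem exists_continuousLinearMap_of_bilipschitz [CompleteSpace X] {N : P → ℝ} {C D : ℝ}
    (hsmul : ∀ t : ℝ, 0 < t → ∀ v, N (t • v) = t * N v) (hNC : ∀ v, N v ≤ C * ‖v‖) (hD : 0 ≤ D)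
    {f : P → X} (hlower : ∀ x y, N (x - y) ≤ ‖f x - f y‖)
    (hupper : ∀ x y, ‖f x - f y‖ ≤ D * N (x - y)) (u : K → P) {ε : ℝ} (hε : 0 < ε) :
    ∃ T : P →L[ℝ] X, (∀ v, ‖T v‖ ≤ D * N v) ∧ ∑ k, N (u k) - ε ≤ ∑ k, ‖T (u k)‖ := by
  have hlip : LipschitzWith (D * C).toNNReal f := LipschitzWith.of_dist_le' fun x y => by
    rw [dist_eq_norm, dist_eq_norm, mul_assoc]
    exact (hupper x y).trans (mul_le_mul_of_nonneg_left (hNC _) hD)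
  obtain ⟨g, hg, hgf, B, hB⟩ := exists_contDiff_of_lipschitzWith hlip
  have hB₀ : 0 ≤ B := (norm_nonneg _).trans (hB 0)
  set R : ℝ := Fintype.card K * (2 * B) / ε + 1
  have hR : 0 < R := by positivity
  have hfar (k : K) (y : P) : R * (N (u k) - 2 * B / R) ≤ ‖g (y + R • u k) - g y‖ := by
    have hfar' := hlower (y + R • u k) y
    rw [add_sub_cancel_left, hsmul R hR] at hfar'
    have htri := dist_triangle4 (f (y + R • u k)) (g (y + R • u k)) (g y) (f y)
    rw [dist_comm (f _) (g _)] at htri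
    simp only [dist_eq_norm] at htri
    rw [mul_sub, mul_div_cancel₀ _ hR.ne']
    linarith [hB (y + R • u k), hB y]
  obtain ⟨z, hz⟩ := exists_sum_le_sum_norm_fderiv hg hR hfar
  refine ⟨fderiv ℝ g z, fun v => ?_, le_trans ?_ hz⟩
  · refine norm_apply_le_of_hasFDerivAt (hg.differentiable one_ne_zero z).hasFDerivAt
      fun t ht => hgf _ _ (fun x => (hupper _ _).trans_eq ?_) z
    rw [add_sub_cancel_left, hsmul t ht]
    ring
  · rw [sum_sub_distrib, sum_const, card_univ, nsmul_eq_mul, ← mul_div_assoc]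
    refine sub_le_sub_left ((div_le_iff₀ hR).2 ?_) _
    rw [mul_add, mul_div_cancel₀ _ hε.ne', mul_one]
    exact le_add_of_nonneg_right hε.le

end Linearization

section TransportationCost

open scoped Pointwise

variable {V : Type*} [DecidableEq V] {d : V → V → ℝ} {μ : V → ℝ}

/-- The costs of the transportation plans representing `μ`; `TCnorm d μ` is their infimum. -/
def transportCosts (d : V → V → ℝ) (μ : V → ℝ) : Set ℝ :=
  {c : ℝ | ∃ (n : ℕ) (a : Fin n → ℝ) (x y : Fin n → V),
    (∀ i, 0 ≤ a i) ∧
    (∀ z : V, μ z = ∑ i, a i * ((if x i = z then (1 : ℝ) else 0) -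
      (if y i = z then (1 : ℝ) else 0))) ∧
    c = ∑ i, a i * d (x i) (y i)}

lemma sum_mul_mem_transportCosts {J : Type*} [Fintype J] {a : J → ℝ} {x y : J → V}
    (ha : ∀ i, 0 ≤ a i)
    (hμ : ∀ z, μ z = ∑ i, a i * ((if x i = z then (1 : ℝ) else 0) - if y i = z then 1 else 0)) :
    ∑ i, a i * d (x i) (y i) ∈ transportCosts d μ := by
  let E := (Fintype.equivFin J).symm
  refine ⟨_, a ∘ E, x ∘ E, y ∘ E, fun i => ha _, fun z => (hμ z).trans ?_, ?_⟩
  exacts [(E.sum_comp _).symm, (E.sum_comp _).symm]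

lemma smul_transportCosts_subset {t : ℝ} (ht : 0 ≤ t) :
    t • transportCosts d μ ⊆ transportCosts d (t • μ) := by
  rintro _ ⟨_, ⟨n, a, x, y, ha, hμ, rfl⟩, rfl⟩
  refine ⟨n, fun i => t * a i, x, y, fun i => mul_nonneg ht (ha i), fun z => ?_, ?_⟩
  · simp only [Pi.smul_apply, smul_eq_mul, hμ z, mul_sum, mul_assoc]
  · simp only [smul_eq_mul, mul_sum, mul_assoc]

variable [Fintype V]

lemma TCnorm_le_of_mem_transportCosts (hd : ∀ x y, 0 ≤ d x y) {c : ℝ}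
    (hc : c ∈ transportCosts d μ) : TCnorm d μ ≤ c := by
  refine csInf_le ⟨0, ?_⟩ hc
  rintro _ ⟨n, a, x, y, ha, -, rfl⟩
  exact sum_nonneg fun i _ => mul_nonneg (ha i) (hd _ _)

lemma TCnorm_smul {t : ℝ} (ht : 0 < t) : TCnorm d (t • μ) = t * TCnorm d μ := by
  suffices h : transportCosts d (t • μ) = t • transportCosts d μ from
    (congrArg sInf h).trans (Real.sInf_smul_of_nonneg ht.le _)
  refine Set.Subset.antisymm ?_ (smul_transportCosts_subset ht.le)
  rw [Set.subset_smul_set_iff₀ ht.ne']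
  simpa only [inv_smul_smul₀ ht.ne'] using
    smul_transportCosts_subset (d := d) (μ := t • μ) (inv_nonneg.2 ht.le)

lemma TCnorm_single_sub_single_le (hd : ∀ x y, 0 ≤ d x y) (x y : V) :
    TCnorm d (Pi.single x 1 - Pi.single y 1) ≤ d x y := by
  have hplan : ∑ _i : Unit, 1 * d x y ∈ transportCosts d (Pi.single x 1 - Pi.single y 1) :=
    sum_mul_mem_transportCosts (x := fun _ => x) (y := fun _ => y) (fun _ => zero_le_one)
      fun z => by simp [Pi.single_apply, eq_comm]
  simpa using TCnorm_le_of_mem_transportCosts hd hplan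

/-- The plan spreading the positive part of `μ` evenly over `V` and collecting its negative part
evenly from `V`. -/
lemma sum_evenPlan_mem_transportCosts (d : V → V → ℝ) (hμ : ∑ v, μ v = 0) :
    ∑ p : V × V, ((μ p.1)⁺ + (μ p.2)⁻) / Fintype.card V * d p.1 p.2 ∈ transportCosts d μ := by
  refine sum_mul_mem_transportCosts (x := Prod.fst) (y := Prod.snd)
    (fun p => div_nonneg (add_nonneg (posPart_nonneg _) (negPart_nonneg _)) (Nat.cast_nonneg _))
    fun z => ?_
  have hcard : (Fintype.card V : ℝ) ≠ 0 := Nat.cast_ne_zero.2 (Fintype.card_pos_iff.2 ⟨z⟩).ne'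
  have hmass : ∑ v, (μ v)⁺ - ∑ v, (μ v)⁻ = 0 := by
    rw [← sum_sub_distrib, ← hμ]
    exact sum_congr rfl fun v _ => posPart_sub_negPart _
  have hout : ∑ p : V × V, ((μ p.1)⁺ + (μ p.2)⁻) / Fintype.card V * (if p.1 = z then 1 else 0) =
      (μ z)⁺ + (∑ v, (μ v)⁻) / Fintype.card V := by
    simp only [mul_ite, mul_one, mul_zero, Fintype.sum_prod_type_right, sum_ite_eq', mem_univ,
      if_true, ← sum_div, sum_add_distrib, sum_const, card_univ, nsmul_eq_mul]
    rw [add_div, mul_div_cancel_left₀ _ hcard]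
  have hin : ∑ p : V × V, ((μ p.1)⁺ + (μ p.2)⁻) / Fintype.card V * (if p.2 = z then 1 else 0) =
      (∑ v, (μ v)⁺) / Fintype.card V + (μ z)⁻ := by
    simp only [mul_ite, mul_one, mul_zero, Fintype.sum_prod_type, sum_ite_eq', mem_univ,
      if_true, ← sum_div, sum_add_distrib, sum_const, card_univ, nsmul_eq_mul]
    rw [add_div, mul_div_cancel_left₀ _ hcard]
  simp only [mul_sub, sum_sub_distrib, hout, hin]
  linear_combination hmass / Fintype.card V - posPart_sub_negPart (μ z)

lemma TCnorm_le_mul_sum_abs (hd : ∀ x y, 0 ≤ d x y) (hμ : ∑ v, μ v = 0) :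
    TCnorm d μ ≤ 2 * (∑ p : V × V, d p.1 p.2) * ∑ v, |μ v| := by
  refine (TCnorm_le_of_mem_transportCosts hd (sum_evenPlan_mem_transportCosts d hμ)).trans ?_
  rw [mul_right_comm, mul_sum]
  refine sum_le_sum fun p _ => mul_le_mul_of_nonneg_right ?_ (hd _ _)
  have habs (v : V) : |μ v| ≤ ∑ v, |μ v| :=
    single_le_sum (f := fun v => |μ v|) (fun v _ => abs_nonneg _) (mem_univ v)
  have hcard : (1 : ℝ) ≤ Fintype.card V := Nat.one_le_cast.2 (Fintype.card_pos_iff.2 ⟨p.1⟩)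
  refine (div_le_self (add_nonneg (posPart_nonneg _) (negPart_nonneg _)) hcard).trans ?_
  rw [two_mul]
  exact add_le_add
    ((sup_le (le_abs_self _) (abs_nonneg _)).trans (habs _))
    ((sup_le (neg_le_abs _) (abs_nonneg _)).trans (habs _))

/-- The easy half of Kantorovich duality. -/
lemma sum_mul_le_TCnorm (hμ : ∑ v, μ v = 0) {h : V → ℝ} (hh : ∀ x y, h x - h y ≤ d x y) :
    ∑ v, μ v * h v ≤ TCnorm d μ := by
  refine le_csInf ⟨_, sum_evenPlan_mem_transportCosts d hμ⟩ ?_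
  rintro _ ⟨n, a, x, y, ha, hplan, rfl⟩
  calc ∑ v, μ v * h v = ∑ i, a i * (h (x i) - h (y i)) := by
        simp only [hplan, sum_mul]
        rw [sum_comm]
        simp only [mul_assoc, ← mul_sum, sub_mul, sum_sub_distrib, ite_mul, one_mul, zero_mul,
          sum_ite_eq, mem_univ, if_true]
    _ ≤ ∑ i, a i * d (x i) (y i) :=
        sum_le_sum fun i _ => mul_le_mul_of_nonneg_left (hh _ _) (ha i)

lemma mul_sum_abs_le_TCnorm (hd : ∀ x y, 0 ≤ d x y) {δ : ℝ} (hδ : 0 ≤ δ)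
    (hsep : ∀ x y, x ≠ y → δ ≤ d x y) (hμ : ∑ v, μ v = 0) :
    δ / 2 * ∑ v, |μ v| ≤ TCnorm d μ := by
  have hsign (v : V) : |(SignType.sign (μ v) : ℝ)| ≤ 1 := by
    obtain h | h | h := lt_trichotomy (μ v) 0 <;> simp [h]
  have hdual := sum_mul_le_TCnorm (d := d) hμ (h := fun v => δ / 2 * (SignType.sign (μ v) : ℝ))
    fun x y => ?_
  · refine le_of_eq_of_le ?_ hdual
    rw [mul_sum]
    refine sum_congr rfl fun v _ => ?_
    rw [mul_left_comm, self_mul_sign]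
  · obtain rfl | hxy := eq_or_ne x y
    · simpa using hd x x
    · rw [← mul_sub]
      refine le_trans ?_ (hsep x y hxy)
      nlinarith [abs_le.1 (hsign x), abs_le.1 (hsign y)]

end TransportationCost

section Transference

variable {V : Type*} [Fintype V] {Ω : Type*} [MeasurableSpace Ω] {ν : Measure Ω}

lemma coeFn_sum_smul_ae (c : V → ℝ) (F : V → Lp ℝ 1 ν) :
    (∑ v, c v • F v : Lp ℝ 1 ν) =ᵐ[ν] fun ω => ∑ v, c v * F v ω := by
  classical
  induction (univ : Finset V) using Finset.induction_on with
  | empty =>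
    simp only [sum_empty]
    exact Lp.coeFn_zero ℝ 1 ν
  | insert a s ha ih =>
    simp only [sum_insert ha]
    filter_upwards [Lp.coeFn_add (c a • F a) (∑ v ∈ s, c v • F v), Lp.coeFn_smul (c a) (F a),
      ih] with ω hadd hsmul hsum
    rw [hadd, Pi.add_apply, hsmul, hsum, Pi.smul_apply, smul_eq_mul]

lemma norm_sum_smul_eq_integral (c : V → ℝ) (F : V → Lp ℝ 1 ν) :
    ‖∑ v, c v • F v‖ = ∫ ω, |∑ v, c v * F v ω| ∂ν := by
  rw [L1.norm_eq_integral_norm]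
  refine integral_congr_ae ?_
  filter_upwards [coeFn_sum_smul_ae c F] with ω h
  rw [h, Real.norm_eq_abs]

lemma integrable_abs_sum_mul (c : V → ℝ) (F : V → Lp ℝ 1 ν) :
    Integrable (fun ω => |∑ v, c v * F v ω|) ν :=
  ((L1.integrable_coeFn (∑ v, c v • F v)).congr (coeFn_sum_smul_ae c F)).abs

variable {K ι : Type*} [Fintype K] [Fintype ι]

lemma sum_norm_sum_smul_le {μ : K → V → ℝ} {w : ι → ℝ} {p q : ι → V}
    (hμ : ∀ g : V → ℝ, ∑ k, |∑ v, μ k v * g v| ≤ ∑ e, w e * |g (p e) - g (q e)|)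
    (F : V → Lp ℝ 1 ν) :
    ∑ k, ‖∑ v, μ k v • F v‖ ≤ ∑ e, w e * ‖F (p e) - F (q e)‖ := by
  classical
  let c (e : ι) : V → ℝ := Pi.single (p e) 1 - Pi.single (q e) 1
  have hc (e : ι) : F (p e) - F (q e) = ∑ v, c e v • F v := by
    simp [c, sub_smul, Pi.single_apply]
  have hc' (e : ι) (g : V → ℝ) : ∑ v, c e v * g v = g (p e) - g (q e) := by
    simp [c, sub_mul, Pi.single_apply]
  simp only [hc, norm_sum_smul_eq_integral, ← integral_const_mul]
  rw [← integral_finsetSum _ fun k _ => integrable_abs_sum_mul (μ k) F,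
    ← integral_finsetSum _ fun e _ => (integrable_abs_sum_mul (c e) F).const_mul (w e)]
  refine integral_mono (integrable_finsetSum _ fun k _ => integrable_abs_sum_mul (μ k) F)
    (integrable_finsetSum _ fun e _ => (integrable_abs_sum_mul (c e) F).const_mul (w e)) fun ω => ?_
  simp only [hc']
  exact hμ fun v => F v ω

end Transference

section Distortion

/-- The distortions of the bi-Lipschitz maps from the transportation cost space `TC(V, d)` to
`L₁`, normalized to be noncontracting; `c1TC d` is their infimum. -/
def distortionsTC {V : Type*} [Fintype V] [DecidableEq V] (d : V → V → ℝ) : Set ℝ :=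
  {D : ℝ | 1 ≤ D ∧ ∃ (Ω : Type) (_ : MeasurableSpace Ω) (ν : Measure Ω)
    (f : {μ : V → ℝ // ∑ x, μ x = 0} → Lp ℝ 1 ν), ∀ x y,
      TCnorm d (fun v => x.1 v - y.1 v) ≤ dist (f x) (f y) ∧
      dist (f x) (f y) ≤ D * TCnorm d (fun v => x.1 v - y.1 v)}

/-- The space of signed measures of total mass zero on a finite set. -/
def ZeroMass (V : Type*) [Fintype V] : Submodule ℝ (V → ℝ) :=
  LinearMap.ker (∑ v, LinearMap.proj v : (V → ℝ) →ₗ[ℝ] ℝ)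

lemma mem_zeroMass {V : Type*} [Fintype V] {μ : V → ℝ} : μ ∈ ZeroMass V ↔ ∑ v, μ v = 0 := by
  simp [ZeroMass, LinearMap.mem_ker]

lemma dist_toLp_count {V : Type*} [Fintype V] [MeasurableSpace V] [MeasurableSingletonClass V]
    (x y : V → ℝ) (hx : MemLp x 1 (Measure.count : Measure V)) (hy : MemLp y 1 Measure.count) :
    dist hx.toLp hy.toLp = ∑ v, |x v - y v| := by
  rw [dist_eq_norm, ← MemLp.toLp_sub, L1.norm_eq_integral_norm]
  exact (integral_congr_ae ((MemLp.coeFn_toLp _).fun_comp norm)).trans (integral_count _)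

lemma exists_eq_sum_smul {V X : Type*} [Fintype V] [AddCommGroup X] [Module ℝ X]
    {P : Submodule ℝ (V → ℝ)} (T : P →ₗ[ℝ] X) :
    ∃ F : V → X, ∀ μ : P, T μ = ∑ v, (μ : V → ℝ) v • F v := by
  classical
  obtain ⟨T', rfl⟩ := T.exists_extend
  refine ⟨fun v => T' (Pi.single v 1), fun μ => ?_⟩
  simp only [← map_smul, ← map_sum]
  exact congrArg T' (pi_eq_sum_univ' (μ : V → ℝ))

variable {V : Type} [Fintype V] [DecidableEq V] {d : V → V → ℝ} {δ : ℝ}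

lemma distortionsTC_nonempty (hd : ∀ x y, 0 ≤ d x y) (hδ : 0 < δ)
    (hsep : ∀ x y, x ≠ y → δ ≤ d x y) :
    (distortionsTC d).Nonempty := by
  let C : ℝ := 2 * ∑ p : V × V, d p.1 p.2
  have hC : 0 ≤ C := mul_nonneg zero_le_two (sum_nonneg fun p _ => hd _ _)
  let _ : MeasurableSpace V := ⊤
  have hmem (g : V → ℝ) : MemLp g 1 (Measure.count : Measure V) :=
    memLp_one_iff_integrable.2 Integrable.of_finite
  refine ⟨max 1 (C / (δ / 2)), le_max_left _ _, V, ⊤, Measure.count,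
    fun μ => (hmem (C • μ.1)).toLp, fun μ ν => ?_⟩
  have hzero : ∑ v, (μ.1 v - ν.1 v) = 0 := by rw [sum_sub_distrib, μ.2, ν.2, sub_zero]
  have hdist : dist (hmem (C • μ.1)).toLp (hmem (C • ν.1)).toLp =
      C * ∑ v, |μ.1 v - ν.1 v| := by
    simp only [dist_toLp_count, Pi.smul_apply, smul_eq_mul, ← mul_sub, abs_mul, abs_of_nonneg hC,
      mul_sum]
  have hlow := mul_sum_abs_le_TCnorm hd hδ.le hsep hzero
  rw [hdist]
  refine ⟨TCnorm_le_mul_sum_abs hd hzero, ?_⟩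
  calc C * ∑ v, |μ.1 v - ν.1 v| = C / (δ / 2) * (δ / 2 * ∑ v, |μ.1 v - ν.1 v|) := by
        rw [← mul_assoc, div_mul_cancel₀ _ (half_pos hδ).ne']
    _ ≤ max 1 (C / (δ / 2)) * TCnorm d fun v => μ.1 v - ν.1 v :=
        mul_le_mul (le_max_right _ _) hlow (by positivity) (by positivity)

/-- A linearized form of `f`: the images of the point masses under a linear extension of an almost
optimal derivative of `f`. -/
lemma exists_sum_TCnorm_sub_le {V X K : Type*} [Fintype V] [DecidableEq V]
    [NormedAddCommGroup X] [NormedSpace ℝ X] [CompleteSpace X] [Fintype K] {d : V → V → ℝ}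
    (hd : ∀ x y, 0 ≤ d x y) {D : ℝ} (hD : 0 ≤ D) {f : {μ : V → ℝ // ∑ x, μ x = 0} → X}
    (hlower : ∀ x y, TCnorm d (fun v => x.1 v - y.1 v) ≤ dist (f x) (f y))
    (hupper : ∀ x y, dist (f x) (f y) ≤ D * TCnorm d fun v => x.1 v - y.1 v)
    {μ : K → V → ℝ} (hμ : ∀ k, ∑ v, μ k v = 0) {ε : ℝ} (hε : 0 < ε) :
    ∃ F : V → X, (∀ x y, ‖F x - F y‖ ≤ D * d x y) ∧
      ∑ k, TCnorm d (μ k) - ε ≤ ∑ k, ‖∑ v, μ k v • F v‖ := by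
  let e (μ : ZeroMass V) : {μ : V → ℝ // ∑ x, μ x = 0} := ⟨μ, mem_zeroMass.1 μ.2⟩
  -- `N` is opaque: unification would otherwise unfold `TCnorm` to its infimum.
  obtain ⟨N, hN⟩ : ∃ N : ZeroMass V → ℝ, ∀ μ, N μ = TCnorm d μ := ⟨_, fun _ => rfl⟩
  have hbound (μ : ZeroMass V) : N μ ≤ 2 * (∑ p : V × V, d p.1 p.2) * Fintype.card V * ‖μ‖ := by
    refine (hN μ).trans_le ((TCnorm_le_mul_sum_abs hd (mem_zeroMass.1 μ.2)).trans ?_)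
    rw [mul_assoc _ (Fintype.card V : ℝ)]
    refine mul_le_mul_of_nonneg_left ?_ (mul_nonneg zero_le_two (sum_nonneg fun p _ => hd _ _))
    simpa using sum_le_card_nsmul univ _ _ fun v _ => norm_le_pi_norm (μ : V → ℝ) v
  have hsmul (t : ℝ) (ht : 0 < t) (μ : ZeroMass V) : N (t • μ) = t * N μ := by
    rw [hN, hN]
    exact TCnorm_smul ht
  have hlow (x y : ZeroMass V) : N (x - y) ≤ ‖f (e x) - f (e y)‖ := by
    rw [hN, ← dist_eq_norm]
    exact hlower (e x) (e y)
  have hupp (x y : ZeroMass V) : ‖f (e x) - f (e y)‖ ≤ D * N (x - y) := by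
    rw [hN, ← dist_eq_norm]
    exact hupper (e x) (e y)
  obtain ⟨T, hTD, hT⟩ := exists_continuousLinearMap_of_bilipschitz (f := f ∘ e) hsmul hbound hD
    hlow hupp (fun k => ⟨μ k, mem_zeroMass.2 (hμ k)⟩) hε
  simp only [hN] at hTD hT
  obtain ⟨F, hF⟩ := exists_eq_sum_smul (T : ZeroMass V →ₗ[ℝ] X)
  refine ⟨F, fun x y => ?_, hT.trans_eq (sum_congr rfl fun k _ => congrArg norm (hF _))⟩
  have hmem : Pi.single x 1 - Pi.single y 1 ∈ ZeroMass V := mem_zeroMass.2 (by simp)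
  have hdiff : F x - F y = T ⟨_, hmem⟩ := by
    refine Eq.trans ?_ (hF ⟨_, hmem⟩).symm
    simp [sub_smul, Pi.single_apply]
  rw [hdiff]
  exact (hTD _).trans (mul_le_mul_of_nonneg_left (TCnorm_single_sub_single_le hd x y) hD)

theorem sum_TCnorm_le_c1TC_mul {K ι : Type*} [Fintype K] [Fintype ι] (hd : ∀ x y, 0 ≤ d x y)
    (hδ : 0 < δ) (hsep : ∀ x y, x ≠ y → δ ≤ d x y) {μ : K → V → ℝ} (hμ : ∀ k, ∑ v, μ k v = 0)
    {w : ι → ℝ} (hw : ∀ e, 0 ≤ w e) {p q : ι → V}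
    (hpair : ∀ g : V → ℝ, ∑ k, |∑ v, μ k v * g v| ≤ ∑ e, w e * |g (p e) - g (q e)|) :
    ∑ k, TCnorm d (μ k) ≤ c1TC d * ∑ e, w e * d (p e) (q e) := by
  have hbound {D : ℝ} (hD : D ∈ distortionsTC d) :
      ∑ k, TCnorm d (μ k) ≤ D * ∑ e, w e * d (p e) (q e) := by
    refine le_of_forall_pos_le_add fun ε hε => ?_
    obtain ⟨hD, Ω, _, ν, f, hf⟩ := hD
    obtain ⟨F, hF, hsum⟩ := exists_sum_TCnorm_sub_le hd (zero_le_one.trans hD)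
      (fun x y => (hf x y).1) (fun x y => (hf x y).2) hμ hε
    calc ∑ k, TCnorm d (μ k) ≤ ∑ k, ‖∑ v, μ k v • F v‖ + ε := sub_le_iff_le_add.1 hsum
      _ ≤ ∑ e, w e * ‖F (p e) - F (q e)‖ + ε := by
          gcongr
          exact sum_norm_sum_smul_le hpair F
      _ ≤ ∑ e, w e * (D * d (p e) (q e)) + ε := by
          gcongr with e
          exacts [hw e, hF _ _]
      _ = D * ∑ e, w e * d (p e) (q e) + ε := by
          simp only [mul_left_comm, mul_sum]
  have hE : 0 ≤ ∑ e, w e * d (p e) (q e) := sum_nonneg fun e _ => mul_nonneg (hw e) (hd _ _)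
  rw [mul_comm, show c1TC d = sInf (distortionsTC d) from rfl, ← smul_eq_mul,
    ← Real.sInf_smul_of_nonneg hE]
  refine le_csInf (distortionsTC_nonempty hd hδ hsep).smul_set ?_
  rintro _ ⟨D, hD, rfl⟩
  exact (hbound hD).trans_eq (mul_comm _ _)

end Distortion

namespace DipoleSystem

open WGraph

variable {G : WGraph} {D : DipoleSystem G}

lemma IsFree.sum_mul_half_len_le_TCnorm (hD : D.IsFree) (hG : G.Preconnected) (r : ℝ)
    (σ : D.I → ℤˣ) :
    ∑ i with D.wt i = r, r * (D.len i / 2) ≤ TCnorm G.gdist (D.signedMeasure r σ) := by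
  have hσ (i : D.I) : |((σ i : ℤ) : ℝ)| = 1 := by
    rcases Int.units_eq_one_or (σ i) with h | h <;> simp [h]
  obtain ⟨h, hlip, -, hdip⟩ := hD r (fun i => ((σ i : ℤ) : ℝ)) fun i => (hσ i).le
  calc ∑ i with D.wt i = r, r * (D.len i / 2)
      = ∑ v, D.signedMeasure r σ v * h v := by
        rw [D.sum_signedMeasure_mul]
        refine sum_congr rfl fun i hi => ?_
        rw [hdip i (mem_filter.1 hi).2, mul_left_comm, ← mul_assoc _ _ (D.len i / 2),
          ← abs_mul_abs_self, hσ, one_mul, one_mul]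
    _ ≤ TCnorm G.gdist (D.signedMeasure r σ) :=
        sum_mul_le_TCnorm (D.sum_signedMeasure r σ) fun x y =>
          (le_abs_self _).trans (hG.abs_sub_le_gdist hlip x y)

lemma sum_wt_mul_len_eq_sum_fiberwise {n : ℕ} (hwt : ∀ i, ∃ j < n, D.wt i = (1 / 2) ^ j) :
    ∑ i, D.wt i * D.len i =
      ∑ j : Fin n, ∑ i with D.wt i = (1 / 2) ^ (j : ℕ), (1 / 2) ^ (j : ℕ) * D.len i := by
  choose j hj hwt using hwt
  have hfiber (k : Fin n) :
      univ.filter (fun i => D.wt i = (1 / 2) ^ (k : ℕ)) =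
        univ.filter fun i => (⟨j i, hj i⟩ : Fin n) = k := by
    refine filter_congr fun i _ => ?_
    rw [hwt, Fin.ext_iff, pow_right_inj₀ (by norm_num) (by norm_num)]
  simp only [hfiber]
  rw [← sum_fiberwise univ fun i => (⟨j i, hj i⟩ : Fin n)]
  refine sum_congr rfl fun k _ => sum_congr rfl fun i hi => ?_
  rw [hwt, ← (mem_filter.1 hi).2]

theorem sum_wt_mul_len_div_two_le_c1TC_mul (htight : D.IsTight) (hfree : D.IsFree) {n : ℕ}
    (hwt : ∀ i, ∃ j < n, D.wt i = (1 / 2) ^ j) (hG : G.Preconnected) {δ : ℝ} (hδ : 0 < δ)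
    (hlen : ∀ e, δ ≤ G.len e) (hth : ∀ e, 0 ≤ G.th e) :
    ∑ i, D.wt i * D.len i / 2 ≤ c1TC G.gdist * ((2 + √2) * ∑ e, G.th e * G.len e) := by
  have hlen₀ (e : G.ι) : 0 ≤ G.len e := hδ.le.trans (hlen e)
  have hc1 : 0 ≤ c1TC G.gdist := Real.sInf_nonneg fun _ hx => zero_le_one.trans hx.1
  let m : ℝ := Fintype.card (D.I → ℤˣ)
  have hm : 0 < m := Nat.cast_pos.2 Fintype.card_pos
  refine le_of_mul_le_mul_left ?_ hm
  calc m * ∑ i, D.wt i * D.len i / 2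
      = ∑ k : Fin n × (D.I → ℤˣ), ∑ i with D.wt i = (1 / 2) ^ (k.1 : ℕ),
          (1 / 2) ^ (k.1 : ℕ) * (D.len i / 2) := by
        rw [Fintype.sum_prod_type, ← sum_div, sum_wt_mul_len_eq_sum_fiberwise hwt]
        simp only [sum_const, card_univ, nsmul_eq_mul, ← mul_sum, ← mul_div_assoc, ← sum_div, m]
    _ ≤ ∑ k : Fin n × (D.I → ℤˣ), TCnorm G.gdist (D.signedMeasure ((1 / 2) ^ (k.1 : ℕ)) k.2) :=
        sum_le_sum fun k _ => hfree.sum_mul_half_len_le_TCnorm hG _ _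
    _ ≤ c1TC G.gdist * ∑ e, m * (2 + √2) * G.th e * G.gdist (G.dst e) (G.src e) :=
        sum_TCnorm_le_c1TC_mul (gdist_nonneg hlen₀) hδ (fun _ _ => hG.le_gdist_of_ne hδ.le hlen)
          (fun k => D.sum_signedMeasure _ _)
          (fun e => mul_nonneg (by positivity) (hth e)) (htight.sum_abs_pairing_le hth n)
    _ ≤ c1TC G.gdist * ∑ e, m * (2 + √2) * G.th e * G.len e := by
        gcongr with e
        exacts [mul_nonneg (by positivity) (hth e), gdist_dst_src_le hlen₀ e]
    _ = m * (c1TC G.gdist * ((2 + √2) * ∑ e, G.th e * G.len e)) := by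
        simp only [mul_sum]
        exact sum_congr rfl fun e _ => by ring

end DipoleSystem

lemma sqrt_two_le_two : √2 ≤ 2 := Real.sqrt_le_iff.2 ⟨zero_le_two, by norm_num⟩

theorem c1_TC_laakso_lower_general (n : ℕ) :
    (2 - √2) / 4 * n ≤ c1TC (laakso.slashPow n).gdist := by
  have hbound := DipoleSystem.sum_wt_mul_len_div_two_le_c1TC_mul (laaksoDipoles_isTight n)
    (laaksoDipoles_isFree n) (laaksoDipoles_wt_eq_pow n) (slashPow_laakso_preconnected n)
    (by positivity) (fun e => (slashPow_laakso_len n e).ge) fun e => (slashPow_laakso_th_pos n e).le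
  rw [← sum_div, sum_laaksoDipoles_wt_mul_len, sum_slashPow_laakso_th_mul_len, mul_one] at hbound
  have hconj : (2 + √2) * (2 - √2) = 2 := by
    rw [← sq_sub_sq, Real.sq_sqrt zero_le_two]
    norm_num
  have hpos : 0 ≤ 2 - √2 := sub_nonneg.2 sqrt_two_le_two
  calc (2 - √2) / 4 * n = n / 2 * (2 - √2) / 2 := by ring
    _ ≤ c1TC (laakso.slashPow n).gdist * (2 + √2) * (2 - √2) / 2 := by gcongr
    _ = c1TC (laakso.slashPow n).gdist := by
        rw [mul_assoc, hconj, mul_div_cancel_right₀ _ two_ne_zero]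

/-- For every `n ≥ 0`, the Laakso graphs satisfy
`c₁(TC(La^{⊘n})) ≥ ((2−√2)/8)·n`. -/
theorem c1_TC_laakso_lower (n : ℕ) :
    c1TC (laakso.slashPow n).gdist ≥ (2 - Real.sqrt 2) / 8 * n := by
  have hpos : 0 ≤ 2 - √2 := sub_nonneg.2 sqrt_two_le_two
  calc (2 - √2) / 8 * (n : ℝ) ≤ (2 - √2) / 4 * n := by gcongr; norm_num
    _ ≤ c1TC (laakso.slashPow n).gdist := c1_TC_laakso_lower_general n
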